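/- Let f be a rational map of degree at least 2 with Julia set J. For any two disjoint f-expanding Cantor repellers Λ₁, Λ₂ ⊂ J that both contain non-immediately postcritical points, there exists an f-expanding Cantor repeller Λ ⊂ J containing Λ₁ ∪ Λ₂. Moreover, if f is topologically transitive on each Λᵢ (i = 1, 2), then f is topologically transitive on Λ. -/

import Mathlib

open Filter Set Metric MeasureTheory Topology
open scoped ENNReal NNReal

noncomputable section

/-! ### The Riemann sphere with the chordal (spherical) metric -/

/-- The Riemann sphere `ℂ ∪ {∞}`. -/
structure RSphere : Type where
  val : Option ℂ

namespace RSphere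

/-- The inclusion of `ℂ` into the Riemann sphere. -/
def ofC (z : ℂ) : RSphere := ⟨some z⟩

/-- The point at infinity. -/
def infty : RSphere := ⟨none⟩

/-- Case elimination on a point of the Riemann sphere. -/
def elim {α : Sort*} (x : RSphere) (i : α) (h : ℂ → α) : α := Option.elim x.val i h

/-- Stereographic embedding of the Riemann sphere onto the round unit sphere in
`ℝ³ = ℂ ×₂ ℝ`.  It induces the chordal (spherical) metric on `RSphere`. -/
def embed (x : RSphere) : WithLp 2 (ℂ × ℝ) :=
  elim x ((WithLp.equiv 2 (ℂ × ℝ)).symm (0, 1))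
    fun z => (WithLp.equiv 2 (ℂ × ℝ)).symm
      (((2 / (‖z‖ ^ 2 + 1)) : ℝ) • z, (‖z‖ ^ 2 - 1) / (‖z‖ ^ 2 + 1))

/-- Inverse of the stereographic embedding. -/
def unembed (v : WithLp 2 (ℂ × ℝ)) : RSphere :=
  if (WithLp.equiv 2 (ℂ × ℝ) v).2 = 1 then infty
  else ofC ((1 - (WithLp.equiv 2 (ℂ × ℝ) v).2)⁻¹ • (WithLp.equiv 2 (ℂ × ℝ) v).1)

lemma leftInverse_unembed : Function.LeftInverse unembed embed := by
  rintro ⟨x⟩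
  cases x with
  | none =>
      simp [embed, unembed, elim, infty]
  | some z =>
      have h1 : (0 : ℝ) < ‖z‖ ^ 2 + 1 := by positivity
      have ht : (‖z‖ ^ 2 - 1) / (‖z‖ ^ 2 + 1) ≠ 1 := by
        intro h
        rw [div_eq_one_iff_eq h1.ne'] at h
        linarith
      simp only [embed, unembed, elim, Option.elim, Equiv.apply_symm_apply, ht, if_false, ofC]
      congr 2
      rw [smul_smul]
      have h2 : 1 - (‖z‖ ^ 2 - 1) / (‖z‖ ^ 2 + 1) = 2 / (‖z‖ ^ 2 + 1) := by
        field_simp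
        ring
      rw [h2]
      rw [inv_mul_cancel₀ (by positivity), one_smul]

lemma embed_injective : Function.Injective embed := leftInverse_unembed.injective

/-- The chordal metric on the Riemann sphere, induced by the stereographic embedding
onto the round unit sphere in Euclidean 3-space. -/
instance : MetricSpace RSphere := MetricSpace.induced embed embed_injective inferInstance

instance : MeasurableSpace RSphere := borel RSphere

instance : BorelSpace RSphere := ⟨rfl⟩

/-- Reading off a finite point (junk value `0` at `∞`). -/
def toC (x : RSphere) : ℂ := elim x 0 id

/-- The involution `z ↦ 1/z` of the Riemann sphere. -/
def inv (x : RSphere) : RSphere :=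
  elim x (ofC 0) fun z => if z = 0 then infty else ofC z⁻¹

end RSphere

/-! ### Basic dynamical notions -/

/-- The norm of the derivative of `g` at `x`, measured in the spherical metric
(for a rational map this is the usual norm of the spherical derivative). -/
def sphDeriv (g : RSphere → RSphere) (x : RSphere) : ℝ :=
  limsup (fun y => dist (g y) (g x) / dist y x) (𝓝[≠] x)

/-- The set of critical points. -/
def critSet (g : RSphere → RSphere) : Set RSphere := {x | sphDeriv g x = 0}

/-- The Fatou set: points having a neighbourhood on which the family of iterates is
equicontinuous (i.e. normal). -/
def fatouSet (f : RSphere → RSphere) : Set RSphere :=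
  {x | ∃ U : Set RSphere, IsOpen U ∧ x ∈ U ∧ EquicontinuousOn (fun n : ℕ => f^[n]) U}

/-- The Julia set. -/
def juliaSet (f : RSphere → RSphere) : Set RSphere := (fatouSet f)ᶜ

/-- `f` is the rational map on the Riemann sphere given by the coprime pair of
polynomials `p`, `q`. -/
structure IsRationalMap (f : RSphere → RSphere) (p q : Polynomial ℂ) : Prop where
  coprime : IsCoprime p q
  continuous : Continuous f
  eval : ∀ z : ℂ, q.eval z ≠ 0 → f (RSphere.ofC z) = RSphere.ofC (p.eval z / q.eval z)

/-- The degree of the rational map `p/q`. -/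
def ratDeg (p q : Polynomial ℂ) : ℕ := max p.natDegree q.natDegree

/-- The lower Lyapunov exponent `χ̲(x) = liminf (1/n) log |(fⁿ)'(x)|`, as an extended real. -/
def lyapLower (f : RSphere → RSphere) (x : RSphere) : EReal :=
  liminf (fun n : ℕ => ((Real.log (sphDeriv (f^[n]) x) / n : ℝ) : EReal)) atTop

/-- The upper Lyapunov exponent `χ̄(x) = limsup (1/n) log |(fⁿ)'(x)|`, as an extended real. -/
def lyapUpper (f : RSphere → RSphere) (x : RSphere) : EReal :=
  limsup (fun n : ℕ => ((Real.log (sphDeriv (f^[n]) x) / n : ℝ) : EReal)) atTop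

/-- The level set `𝓛(a,b)` of points of the Julia set with lower exponent `a` and
upper exponent `b`. -/
def levelSet (f : RSphere → RSphere) (a b : EReal) : Set RSphere :=
  {x | x ∈ juliaSet f ∧ lyapLower f x = a ∧ lyapUpper f x = b}

/-- The set `𝓛̂(α,β)` of points of the Julia set with `χ̲ ≤ β`, `χ̄ ≥ α` and `χ̄ > 0`. -/
def levelHat (f : RSphere → RSphere) (α β : ℝ) : Set RSphere :=
  {x | x ∈ juliaSet f ∧ lyapLower f x ≤ (β : EReal) ∧ (α : EReal) ≤ lyapUpper f x ∧
    0 < lyapUpper f x}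

/-- Birkhoff sum `S_m φ = φ + φ∘g + ⋯ + φ∘g^{m-1}`. -/
def birkhoff (g : RSphere → RSphere) (φ : RSphere → ℝ) (m : ℕ) (x : RSphere) : ℝ :=
  ∑ k ∈ Finset.range m, φ (g^[k] x)

/-- An `(m,ε)`-separated finite subset of `Λ` for the map `g`. -/
def IsSepSet (g : RSphere → RSphere) (Λ : Set RSphere) (m : ℕ) (ε : ℝ)
    (E : Finset RSphere) : Prop :=
  ↑E ⊆ Λ ∧ ∀ x ∈ E, ∀ y ∈ E, x ≠ y → ∃ k < m, ε ≤ dist (g^[k] x) (g^[k] y)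

/-- Topological pressure of the potential `φ` for `g` restricted to `Λ`,
defined à la Bowen via `(m,ε)`-separated sets. -/
def pressureOn (g : RSphere → RSphere) (Λ : Set RSphere) (φ : RSphere → ℝ) : ℝ :=
  ⨆ ε : {ε : ℝ // 0 < ε}, limsup (fun m : ℕ =>
    Real.log (⨆ E : {E : Finset RSphere // IsSepSet g Λ m ε.1 E},
      ∑ x ∈ E.1, Real.exp (birkhoff g φ m x)) / m) atTop

/-- `g` is uniformly expanding on `Λ`: `|(gᵐ)'(x)| ≥ c λᵐ` for some `c > 0`, `λ > 1`. -/
def ExpandingOn (g : RSphere → RSphere) (Λ : Set RSphere) : Prop :=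
  ∃ c > (0 : ℝ), ∃ l : ℝ, 1 < l ∧ ∀ x ∈ Λ, ∀ m : ℕ, 1 ≤ m → c * l ^ m ≤ sphDeriv (g^[m]) x

/-- `Λ` is a repeller for `g`: a compact invariant isolated set. -/
def IsRepeller (g : RSphere → RSphere) (Λ : Set RSphere) : Prop :=
  IsCompact Λ ∧ g '' Λ = Λ ∧
    ∃ U : Set RSphere, IsOpen U ∧ Λ ⊆ U ∧ ∀ x, (∀ m : ℕ, g^[m] x ∈ U) → x ∈ Λ

/-- Topological transitivity of `g` on `Λ`. -/
def TopTransOn (g : RSphere → RSphere) (Λ : Set RSphere) : Prop :=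
  ∀ U V : Set RSphere, IsOpen U → IsOpen V → (U ∩ Λ).Nonempty → (V ∩ Λ).Nonempty →
    ∃ m : ℕ, (g^[m] '' (U ∩ Λ) ∩ V).Nonempty

/-- The topological pressure of `φ` with respect to `f` on its Julia set, given by
the supremum of the pressures on compact invariant uniformly expanding subsets of `J`. -/
def pressureTop (f : RSphere → RSphere) (φ : RSphere → ℝ) : ℝ :=
  ⨆ L : {L : Set RSphere //
      L.Nonempty ∧ L ⊆ juliaSet f ∧ IsCompact L ∧ f '' L = L ∧ ExpandingOn f L},
    pressureOn f L.1 φ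

/-- The pressure function `d ↦ P(φ_d)` where `φ_d = -d log|f'|`. -/
def pressFamily (f : RSphere → RSphere) (d : ℝ) : ℝ :=
  pressureTop f fun x => -d * Real.log (sphDeriv f x)

/-- `F(α) = α⁻¹ inf_d (Q(d) + dα)` associated with a pressure function `Q` (for `α ≠ 0`). -/
def specF (Q : ℝ → ℝ) (α : ℝ) : EReal :=
  ((α⁻¹ : ℝ) : EReal) * ⨅ d : ℝ, ((Q d + d * α : ℝ) : EReal)

/-- `F(0) = lim_{α → 0⁺} F(α)`. -/
def specF0 (Q : ℝ → ℝ) : EReal := limsup (fun α : ℝ => specF Q α) (𝓝[>] (0 : ℝ))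

/-- The full spectrum function `F` associated with a pressure function `Q`. -/
def specFext (Q : ℝ → ℝ) (α : ℝ) : EReal := if α = 0 then specF0 Q else specF Q α

/-- The Lyapunov spectrum function `F` of `f`. -/
def Ffun (f : RSphere → RSphere) (α : ℝ) : EReal := specFext (pressFamily f) α

/-- `α⁻ = lim_{d → +∞} -Q(d)/d` for a pressure function `Q`. -/
def alphaMinusOf (Q : ℝ → ℝ) : ℝ := limsup (fun d : ℝ => -Q d / d) atTop

/-- `α⁺ = lim_{d → -∞} -Q(d)/d` for a pressure function `Q`. -/
def alphaPlusOf (Q : ℝ → ℝ) : ℝ := limsup (fun d : ℝ => -Q d / d) atBot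

/-- `α⁻` for the map `f`. -/
def alphaMinus (f : RSphere → RSphere) : ℝ := alphaMinusOf (pressFamily f)

/-- `α⁺` for the map `f`. -/
def alphaPlus (f : RSphere → RSphere) : ℝ := alphaPlusOf (pressFamily f)

/-- The Lyapunov exponent `χ(μ) = ∫ log|g'| dμ` of a measure. -/
def lyapMeas (g : RSphere → RSphere) (μ : Measure RSphere) : ℝ :=
  ∫ x, Real.log (sphDeriv g x) ∂μ

/-- `α⁻` as the infimum of Lyapunov exponents of invariant probability measures on `J`. -/
def alphaMinusMeas (f : RSphere → RSphere) : ℝ :=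
  sInf {r : ℝ | ∃ μ : Measure RSphere, IsProbabilityMeasure μ ∧ MeasurePreserving f μ μ ∧
    μ (juliaSet f)ᶜ = 0 ∧ r = lyapMeas f μ}

/-- `α⁺` as the supremum of Lyapunov exponents of invariant probability measures on `J`. -/
def alphaPlusMeas (f : RSphere → RSphere) : ℝ :=
  sSup {r : ℝ | ∃ μ : Measure RSphere, IsProbabilityMeasure μ ∧ MeasurePreserving f μ μ ∧
    μ (juliaSet f)ᶜ = 0 ∧ r = lyapMeas f μ}

/-- The maximal distortion `sup_{x,y ∈ Z} |g'(x)|/|g'(y)|` of `g` on `Z`. -/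
def distortionOn (g : RSphere → RSphere) (Z : Set RSphere) : ℝ :=
  sSup {r : ℝ | ∃ x ∈ Z, ∃ y ∈ Z, r = sphDeriv g x / sphDeriv g y}

/-- Conical points. -/
def IsConical (f : RSphere → RSphere) (x : RSphere) : Prop :=
  ∃ r : ℝ, 0 < r ∧ ∃ K : ℝ, ∃ n : ℕ → ℕ, StrictMono n ∧ ∃ U : ℕ → Set RSphere,
    ∀ i, U i ∈ 𝓝 x ∧ ball (f^[n i] x) r ⊆ f^[n i] '' U i ∧ distortionOn (f^[n i]) (U i) ≤ K

/-- A non-immediately postcritical point: there is a backward orbit through it that is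
dense in the Julia set and avoids the critical points. -/
def NonImmPostCrit (f : RSphere → RSphere) (x : RSphere) : Prop :=
  ∃ b : ℕ → RSphere, b 0 = x ∧ (∀ n, f (b (n + 1)) = b n) ∧
    juliaSet f ⊆ closure (Set.range b) ∧ ∀ n, b n ∉ critSet f

/-- `f` is exceptional: there is a finite nonempty set `Σ_f` with `f⁻¹(Σ_f) \ Crit = Σ_f`. -/
def IsExceptional (f : RSphere → RSphere) : Prop :=
  ∃ S : Set RSphere, S.Finite ∧ S.Nonempty ∧ f ⁻¹' S \ critSet f = S

/-- The largest exceptional set `Σ` of `f`. -/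
def maxExceptional (f : RSphere → RSphere) : Set RSphere :=
  ⋃₀ {S : Set RSphere | S.Finite ∧ S.Nonempty ∧ f ⁻¹' S \ critSet f = S}

/-- `0` not being exceptional, or having exceptional set away from the Julia set. -/
def GoodExc (f : RSphere → RSphere) : Prop :=
  ¬ IsExceptional f ∨ maxExceptional f ∩ juliaSet f = ∅

/-- A parabolic periodic point at a finite point `z`: a periodic point whose multiplier
is a root of unity. -/
def IsParabolicFix (g : RSphere → RSphere) (z : ℂ) : Prop :=
  ∃ m : ℕ, 0 < m ∧ g^[m] (RSphere.ofC z) = RSphere.ofC z ∧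
    ∃ lam : ℂ, (∃ k : ℕ, 0 < k ∧ lam ^ k = 1) ∧
      HasDerivAt (fun w => RSphere.toC (g^[m] (RSphere.ofC w))) lam z

/-- A parabolic periodic point of `f` (at a finite point, or at `∞` read in the chart `1/z`). -/
def IsParabolic (f : RSphere → RSphere) (x : RSphere) : Prop :=
  (∃ z : ℂ, x = RSphere.ofC z ∧ IsParabolicFix f z) ∨
  (x = RSphere.infty ∧ IsParabolicFix (fun y => RSphere.inv (f (RSphere.inv y))) 0)

/-- A recurrent point. -/
def IsRecurrentPt (f : RSphere → RSphere) (x : RSphere) : Prop :=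
  ∃ n : ℕ → ℕ, StrictMono n ∧ Tendsto (fun i => f^[n i] x) atTop (𝓝 x)

/-! ### Graph directed systems and expanding Cantor repellers -/

/-- A graph directed system (GDS) satisfying the strong separation condition with
respect to the map `g`. -/
structure GDS (g : RSphere → RSphere) where
  /-- number of vertices -/
  n : ℕ
  npos : 0 < n
  /-- the open domains -/
  U : Fin n → Set RSphere
  /-- the admissible edges -/
  edge : Fin n → Fin n → Prop
  /-- the inverse branches -/
  br : Fin n → Fin n → RSphere → RSphere
  isOpen : ∀ k, IsOpen (U k)
  isConnected : ∀ k, IsConnected (U k)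
  disjClosure : ∀ k l, k ≠ l → closure (U k) ∩ closure (U l) = ∅
  mapsTo : ∀ k l, edge k l → Set.MapsTo (br k l) (closure (U l)) (U k)
  isBranch : ∀ k l, edge k l → ∀ x ∈ closure (U l), g (br k l x) = x
  bddDistortion : ∃ C : ℝ, ∀ k l, edge k l → distortionOn (br k l) (closure (U l)) ≤ C

/-- The cylinder sets of depth `m` of a GDS. -/
def gdsCyl {g : RSphere → RSphere} (G : GDS g) : ℕ → Set RSphere
  | 0 => ⋃ k, G.U k
  | m + 1 => ⋃ (k : Fin G.n) (l : Fin G.n) (_ : G.edge k l),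
      G.br k l '' (gdsCyl G m ∩ G.U l)

/-- The limit set of a GDS. -/
def gdsLimit {g : RSphere → RSphere} (G : GDS g) : Set RSphere := ⋂ m, gdsCyl G m

/-- An expanding Cantor repeller (ECR) for `g`: a uniformly expanding repeller which is
the limit set of a GDS satisfying the strong separation condition, with `g(Λ) = Λ`. -/
def IsECR (g : RSphere → RSphere) (Λ : Set RSphere) : Prop :=
  ExpandingOn g Λ ∧ IsRepeller g Λ ∧ ∃ G : GDS g, gdsLimit G = Λ

/-- A Cantor set: compact, perfect and totally disconnected. -/
def IsCantorSet (s : Set RSphere) : Prop :=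
  IsCompact s ∧ Perfect s ∧ IsTotallyDisconnected s

/-! ### Entropy, equilibrium states and dimensions -/

/-- The entropy of a countable partition (given by the fibers of `p`). -/
def partEntropy {ι : Type} [Countable ι] (μ : Measure RSphere) (p : RSphere → ι) : ℝ :=
  ∑' i : ι, Real.negMulLog (μ (p ⁻¹' {i})).toReal

/-- Measure-theoretic (Kolmogorov–Sinai) entropy of `T` with respect to `μ`:
supremum over finite measurable partitions of the exponential growth rate of the
entropies of the dynamical refinements. -/
def entropyOf (T : RSphere → RSphere) (μ : Measure RSphere) : ℝ :=
  ⨆ p : {p : RSphere → ℕ // Measurable p ∧ (Set.range p).Finite},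
    ⨅ n : {n : ℕ // 0 < n},
      partEntropy μ (fun x => fun k : Fin n.1 => p.1 (T^[(k : ℕ)] x)) / (n.1 : ℝ)

/-- An equilibrium state for the potential `φ` with respect to `g` restricted to `Λ`. -/
def IsEquilibrium (g : RSphere → RSphere) (Λ : Set RSphere) (φ : RSphere → ℝ)
    (μ : Measure RSphere) : Prop :=
  IsProbabilityMeasure μ ∧ μ Λᶜ = 0 ∧ MeasurePreserving g μ μ ∧
    entropyOf g μ + ∫ x, φ x ∂μ = pressureOn g Λ φ

/-- The Hausdorff dimension of a measure: the infimum of the Hausdorff dimensions of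
sets of full measure. -/
def dimHMeasure (μ : Measure RSphere) : ℝ≥0∞ :=
  ⨅ (s : Set RSphere) (_ : μ sᶜ = 0), dimH s

/-- The minimal number of `ε`-balls needed to cover `s`. -/
def coverNum (s : Set RSphere) (ε : ℝ) : ℕ :=
  sInf {n : ℕ | ∃ t : Finset RSphere, t.card = n ∧ s ⊆ ⋃ x ∈ t, ball x ε}

/-- The upper box-counting dimension. -/
def upperBoxDim (s : Set RSphere) : ℝ :=
  limsup (fun n : ℕ => Real.log (coverNum s (1 / n)) / Real.log n) atTop

/-- The packing dimension, via countable covers and upper box dimensions. -/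
def dimP (s : Set RSphere) : ℝ≥0∞ :=
  ⨅ c : {c : ℕ → Set RSphere // s ⊆ ⋃ n, c n},
    ⨆ n : ℕ, ENNReal.ofReal (upperBoxDim (c.1 n))

/-- The connected component of `y` in `g⁻¹(B)`: the pull-back of `B` along the inverse
branch of `g` sending (the image of) `y` to `y`. -/
def invBranchSet (g : RSphere → RSphere) (B : Set RSphere) (y : RSphere) : Set RSphere :=
  connectedComponentIn (g ⁻¹' B) y

end

/-!
Join the two repellers by backward orbits `y` and `w`, disjoint from the critical set, where `y`
starts in `Λ₂` and accumulates only on `Λ₁`, and `w` starts in `Λ₁` and accumulates only on `Λ₂`.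
They exist because a backward orbit that is dense in the Julia set comes so close to the expanding
set `Λᵢ` that from there on preimages can be chosen along `Λᵢ`. The set
`X = (Λ₁ ∪ range y) ∪ (Λ₂ ∪ range w)` is compact, invariant and totally disconnected, and some
iterate of `f` expands at each of its points, so by compactness `f` is uniformly expanding on every
invariant set close to `X`.

In an adapted metric `f` expands near `X` in one step, which gives shadowing. Colour a neighbourhood
of `X` by a partition into small clopen pieces: the points whose orbits only read words of colours
that already occur along `X` form an isolated invariant set `Λ ⊇ X`, still totally disconnected. If
`f` is transitive on both `Λᵢ`, then `X` is chain transitive, and shadowing turns this into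
transitivity on `Λ`. Finally the components of small thickenings of `Λ` and the inverse branches
between them are a graph directed system with limit set `Λ`.
-/

/-! ### Totally disconnected compact sets -/

lemma isTotallyDisconnected_union {S : Type*} [TopologicalSpace S] [T2Space S] {A B : Set S}
    (hA : IsTotallyDisconnected A) (hB : IsTotallyDisconnected B) (hAc : IsClosed A)
    (hBc : IsCompact B) : IsTotallyDisconnected (A ∪ B) := by
  intro C hC hpre
  by_cases hCA : C ⊆ A
  · exact hA C hCA hpre
  obtain ⟨x, hxC, hxA⟩ := not_subset.mp hCA
  suffices C ⊆ {x} from subsingleton_singleton.anti this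
  by_contra hCx
  obtain ⟨y, hyC, hyx⟩ := not_subset.mp hCx
  have hxB : x ∈ B := (hC hxC).resolve_left hxA
  have : CompactSpace B := isCompact_iff_compactSpace.mp hBc
  have : TotallyDisconnectedSpace B := totallyDisconnectedSpace_subtype_iff.mpr hB
  obtain ⟨V, hV, hxV, hVsub⟩ : ∃ V : Set B, IsClopen V ∧ ⟨x, hxB⟩ ∈ V ∧ V ⊆ (↑) ⁻¹' (A ∪ {y})ᶜ :=
    compact_exists_isClopen_in_isOpen
      ((hAc.union isClosed_singleton).isOpen_compl.preimage continuous_subtype_val)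
      (by simp [hxA, Ne.symm hyx])
  have hclosed {E : Set B} (hE : IsClosed E) : IsClosed ((↑) '' E : Set S) :=
    (hE.isCompact.image continuous_subtype_val).isClosed
  obtain ⟨z, -, ⟨b, hbV, rfl⟩, hz⟩ := isPreconnected_closed_iff.mp hpre ((↑) '' V)
    (A ∪ (↑) '' Vᶜ) (hclosed hV.isClosed) (hAc.union (hclosed hV.compl.isClosed))
    (by rwa [union_left_comm, ← image_union, union_compl_self, image_univ, Subtype.range_val])
    ⟨x, hxC, _, hxV, rfl⟩
    ⟨y, hyC, (hC hyC).imp_right fun hyB => ⟨⟨y, hyB⟩, fun hyV => hVsub hyV (.inr rfl), rfl⟩⟩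
  rcases hz with hbA | ⟨b', hb', hbb'⟩
  · exact hVsub hbV (.inl hbA)
  · exact hb' (Subtype.val_injective hbb' ▸ hbV)

/-- The colouring `c` of the `γ`-neighbourhood of `X` is constant at scale `γ` and separates
points at distance at least `δ`. -/
structure IsColoring {S ι : Type*} [PseudoMetricSpace S] (X : Set S) (γ δ : ℝ) (c : S → ι) :
    Prop where
  pos : 0 < γ
  eq_of_dist_lt : ∀ u ∈ thickening γ X, ∀ v ∈ thickening γ X, dist u v < γ → c u = c v
  dist_lt_of_eq : ∀ u ∈ thickening γ X, ∀ v ∈ thickening γ X, c u = c v → dist u v < δ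

lemma IsColoring.mono {S ι : Type*} [PseudoMetricSpace S] {X : Set S} {γ γ' δ : ℝ} {c : S → ι}
    (h : IsColoring X γ δ c) (hpos : 0 < γ') (hle : γ' ≤ γ) : IsColoring X γ' δ c where
  pos := hpos
  eq_of_dist_lt u hu v hv huv := h.eq_of_dist_lt u (thickening_mono hle X hu) v
    (thickening_mono hle X hv) (huv.trans_le hle)
  dist_lt_of_eq u hu v hv := h.dist_lt_of_eq u (thickening_mono hle X hu) v
    (thickening_mono hle X hv)

lemma exists_locallyConstant_dist_lt {X : Type*} [PseudoMetricSpace X] [T0Space X]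
    [CompactSpace X] [TotallyDisconnectedSpace X] {δ : ℝ} (hδ : 0 < δ) :
    ∃ γ > 0, ∃ c : X → ℕ, (∀ x y, dist x y < γ → c x = c y) ∧ ∀ x y, c x = c y → dist x y < δ := by
  obtain ⟨n, g, center, hg, hcenter⟩ :=
    (ContinuousMap.id X).exists_finite_approximation_of_mem_nhds_diagonal
      (nhdsSet_diagonal_le_uniformity (dist_mem_uniformity (half_pos hδ)))
  have hc : Continuous fun x => (g x : ℕ) := continuous_of_discreteTopology.comp hg
  obtain ⟨γ, hγ, hγc⟩ := Metric.uniformContinuous_iff.mp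
    (CompactSpace.uniformContinuous_of_continuous hc) 1 one_pos
  refine ⟨γ, hγ, fun x => g x, fun x y hxy => ?_, fun x y hxy => ?_⟩
  · by_contra hne
    exact (Nat.pairwise_one_le_dist hne).not_gt (hγc hxy)
  · have hgxy : g x = g y := Fin.val_injective hxy
    calc dist x y ≤ dist x (center (g x)) + dist y (center (g x)) := dist_triangle_right _ _ _
      _ < δ / 2 + δ / 2 := add_lt_add (hcenter x) (hgxy ▸ hcenter y)
      _ = δ := add_halves δ

lemma exists_isColoring {S : Type*} [MetricSpace S] {X : Set S} (hX : IsCompact X)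
    (htd : IsTotallyDisconnected X) {δ : ℝ} (hδ : 0 < δ) :
    ∃ (γ : ℝ) (c : S → ℕ), IsColoring X γ δ c := by
  rcases X.eq_empty_or_nonempty with rfl | hne
  · exact ⟨1, fun _ => 0, one_pos, by simp, by simp⟩
  have : Nonempty X := hne.to_subtype
  have : CompactSpace X := isCompact_iff_compactSpace.mp hX
  have : TotallyDisconnectedSpace X := totallyDisconnectedSpace_subtype_iff.mpr htd
  obtain ⟨γ₀, hγ₀, c, hc_eq, hc_lt⟩ :=
    exists_locallyConstant_dist_lt (X := X) (δ := δ / 3) (by positivity)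
  set γ := min (γ₀ / 3) (δ / 3)
  have hγγ₀ : γ ≤ γ₀ / 3 := min_le_left _ _
  have hγδ : γ ≤ δ / 3 := min_le_right _ _
  have hγ : 0 < γ := lt_min (by positivity) (by positivity)
  choose! nearest hnearest using fun (u : S) (hu : u ∈ thickening γ X) =>
    show ∃ x : X, dist u x < γ by simpa [mem_thickening_iff] using hu
  refine ⟨γ, c ∘ nearest, hγ, fun u hu v hv huv => hc_eq _ _ ?_, fun u hu v hv huv => ?_⟩
  · rw [Subtype.dist_eq]
    linarith [hnearest u hu, hnearest v hv,
      dist_triangle4_left u v (nearest u : S) (nearest v)]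
  · have hlt := hc_lt _ _ huv
    rw [Subtype.dist_eq] at hlt
    linarith [hnearest u hu, hnearest v hv,
      dist_triangle4_right u v (nearest u : S) (nearest v)]

lemma IsColoring.eq_of_isPreconnected {S ι : Type*} [PseudoMetricSpace S] {X C : Set S} {γ δ : ℝ}
    {c : S → ι} (h : IsColoring X γ δ c) (hC : IsPreconnected C) (hCX : C ⊆ thickening γ X)
    {u v : S} (hu : u ∈ C) (hv : v ∈ C) : c u = c v := by
  let _ : TopologicalSpace ι := ⊥
  have : DiscreteTopology ι := ⟨rfl⟩
  refine hC.constant (fun x hx => ?_) hu hv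
  rw [ContinuousWithinAt, nhds_discrete, tendsto_pure]
  filter_upwards [self_mem_nhdsWithin, mem_nhdsWithin_of_mem_nhds (ball_mem_nhds x h.pos)]
    with y hyC hyx
  exact h.eq_of_dist_lt y (hCX hyC) x (hCX hx) hyx

/-! ### Locally expanding maps -/

/-- The map `f` expands short distances near `X` by the factor `κ`, and near `X` it has local
inverses of uniform size. -/
structure LocallyExpanding {S : Type*} [MetricSpace S] (f : S → S) (X : Set S) (κ r : ℝ) :
    Prop where
  one_lt : 1 < κ
  r_pos : 0 < r
  expand : ∀ u ∈ thickening r X, ∀ v, dist u v < r → κ * dist u v ≤ dist (f u) (f v)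
  lift : ∀ u ∈ thickening r X, ∀ v, dist (f u) v < r → ∃ w, f w = v ∧ κ * dist u w ≤ dist (f u) v

namespace LocallyExpanding

variable {S : Type*} [MetricSpace S] {f : S → S} {X Y : Set S} {κ r r' : ℝ}

lemma kappa_pos (h : LocallyExpanding f X κ r) : 0 < κ := zero_lt_one.trans h.one_lt

lemma mono (h : LocallyExpanding f X κ r) (hr' : 0 < r') (hr : r' ≤ r)
    (hY : thickening r' Y ⊆ thickening r X) : LocallyExpanding f Y κ r' where
  one_lt := h.one_lt
  r_pos := hr'
  expand u hu v huv := h.expand u (hY hu) v (huv.trans_le hr)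
  lift u hu v huv := h.lift u (hY hu) v (huv.trans_le hr)

lemma dist_lt_of_mul_le (h : LocallyExpanding f X κ r) {a b ε : ℝ} (ha : 0 ≤ a) (hab : κ * a ≤ b)
    (hb : b < ε) : a < ε :=
  (le_mul_of_one_le_left ha h.one_lt.le).trans_lt (hab.trans_lt hb)

lemma exists_lt_pow_mul (h : LocallyExpanding f X κ r) {ε : ℝ} (hε : 0 < ε) (R : ℝ) :
    ∃ n : ℕ, R < κ ^ n * ε := by
  obtain ⟨n, hn⟩ := pow_unbounded_of_one_lt (R / ε) h.one_lt
  exact ⟨n, (div_lt_iff₀ hε).mp hn⟩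

lemma pow_mul_dist_le (h : LocallyExpanding f X κ r) {u v : S} (n : ℕ)
    (hu : ∀ j < n, f^[j] u ∈ thickening r X) (hd : ∀ j < n, dist (f^[j] u) (f^[j] v) < r) :
    κ ^ n * dist u v ≤ dist (f^[n] u) (f^[n] v) := by
  induction n with
  | zero => simp
  | succ n ih =>
    calc κ ^ (n + 1) * dist u v = κ * (κ ^ n * dist u v) := by ring
      _ ≤ κ * dist (f^[n] u) (f^[n] v) := mul_le_mul_of_nonneg_left
          (ih (fun j hj => hu j (by omega)) fun j hj => hd j (by omega)) h.kappa_pos.le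
      _ ≤ dist (f^[n + 1] u) (f^[n + 1] v) := by
          simpa only [Function.iterate_succ_apply'] using h.expand _ (hu n (by omega)) _
            (hd n (by omega))

lemma eq_of_forall_dist_iterate_lt (h : LocallyExpanding f X κ r) {u v : S}
    (hu : ∀ j, f^[j] u ∈ thickening r X) (hd : ∀ j, dist (f^[j] u) (f^[j] v) < r) : u = v := by
  by_contra hne
  obtain ⟨n, hn⟩ := h.exists_lt_pow_mul (dist_pos.mpr hne) r
  linarith [hd n, h.pow_mul_dist_le n (fun j _ => hu j) fun j _ => hd j]

end LocallyExpanding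

/-! ### Enlarging an expanding set to an isolated one -/

/-- One step of a pseudo-orbit of `f` in `X`, whose jumps are controlled by the neighbourhood `D` of
the diagonal. -/
def ChainStep {S : Type*} (f : S → S) (X : Set S) (D : Set (S × S)) (u v : S) : Prop :=
  u ∈ X ∧ v ∈ X ∧ (f u, v) ∈ D

/-- Any two points of `X` are joined by pseudo-orbits in `X` with arbitrarily small jumps. -/
def ChainTransitiveOn {S : Type*} [TopologicalSpace S] (f : S → S) (X : Set S) : Prop :=
  ∀ D ∈ 𝓝ˢ (diagonal S), ∀ a ∈ X, ∀ b ∈ X, Relation.ReflTransGen (ChainStep f X D) a b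

/-- Topological transitivity of `f` on `X`, for a map of an arbitrary space. -/
def TransitiveOn {S : Type*} [TopologicalSpace S] (f : S → S) (X : Set S) : Prop :=
  ∀ U V : Set S, IsOpen U → IsOpen V → (U ∩ X).Nonempty → (V ∩ X).Nonempty →
    ∃ m : ℕ, (f^[m] '' (U ∩ X) ∩ V).Nonempty

/-- The points whose forward orbit never leaves `W`. -/
def survivorSet {S : Type*} (f : S → S) (W : Set S) : Set S := {z | ∀ i, f^[i] z ∈ W}

section survivorSet

variable {S : Type*} {f : S → S} {W W' X : Set S} {z : S}

lemma survivorSet_subset : survivorSet f W ⊆ W := fun _ hz => hz 0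

lemma survivorSet_mono (h : W ⊆ W') : survivorSet f W ⊆ survivorSet f W' := fun _ hz i => h (hz i)

lemma mapsTo_survivorSet : MapsTo f (survivorSet f W) (survivorSet f W) := fun _ hz i => hz (i + 1)

lemma subset_survivorSet (hX : MapsTo f X X) (hXW : X ⊆ W) : X ⊆ survivorSet f W :=
  fun _ hx i => hXW (hX.iterate i hx)

lemma mem_survivorSet_of_apply (hz : z ∈ W) (hfz : f z ∈ survivorSet f W) : z ∈ survivorSet f W
  | 0 => hz
  | i + 1 => hfz i

end survivorSet

/-- The colours met by the first `n + 1` points of the orbit of `z`. -/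
def word {S ι : Type*} (f : S → S) (c : S → ι) (n : ℕ) (z : S) : Fin (n + 1) → ι :=
  fun j => c (f^[j] z)

lemma word_eq_word_iff {S ι : Type*} {f : S → S} {c : S → ι} {n : ℕ} {y z : S} :
    word f c n y = word f c n z ↔ ∀ j ≤ n, c (f^[j] y) = c (f^[j] z) := by
  simp [word, funext_iff, Fin.forall_iff]

/-- The points which stay for `n + 1` steps in the neighbourhood of `X` coloured by `c`. -/
def wordDomain {S : Type*} [PseudoMetricSpace S] (f : S → S) (X : Set S) (γ : ℝ) (n : ℕ) :
    Set S := {z | ∀ j ≤ n, f^[j] z ∈ thickening γ X}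

/-- The points whose word of length `n + 1` is the word of a point of `X`. -/
def wordNhd {S ι : Type*} [PseudoMetricSpace S] (f : S → S) (X : Set S) (γ : ℝ) (c : S → ι)
    (n : ℕ) : Set S := {z ∈ wordDomain f X γ n | ∃ x ∈ X, word f c n z = word f c n x}

section wordNhd

variable {S ι : Type*} [PseudoMetricSpace S] {f : S → S} {X : Set S} {γ : ℝ} {c : S → ι} {n : ℕ}

lemma wordNhd_subset : wordNhd f X γ c n ⊆ thickening γ X := fun _ hz => hz.1 0 n.zero_le

lemma survivorSet_subset_wordDomain :
    survivorSet f (wordNhd f X γ c n) ⊆ wordDomain f X γ n := fun _ hz => (hz 0).1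

end wordNhd

/-- An expanding map with a colouring near an invariant set `X`, and a word length `n` for which
words determine points up to `γ / 2`. The orbits whose words are words of `X` then form a
subshift of finite type, `survivorSet f (wordNhd f X γ c n)`. -/
structure ExpandingColoring {S ι : Type*} [MetricSpace S] (f : S → S) (X : Set S) (κ r γ : ℝ)
    (c : S → ι) (n : ℕ) : Prop extends LocallyExpanding f X κ r, IsColoring X γ r c where
  continuous : Continuous f
  mapsTo : MapsTo f X X
  le : γ ≤ r
  depth : r < κ ^ n * (γ / 2)

namespace ExpandingColoring

variable {S ι : Type*} [MetricSpace S] {f : S → S} {X : Set S} {κ r γ : ℝ} {c : S → ι} {n : ℕ}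
  {y z : S}

lemma subset_wordDomain (h : ExpandingColoring f X κ r γ c n) : X ⊆ wordDomain f X γ n :=
  fun _ hx j _ => self_subset_thickening h.pos X (h.mapsTo.iterate j hx)

lemma subset_wordNhd (h : ExpandingColoring f X κ r γ c n) : X ⊆ wordNhd f X γ c n :=
  fun x hx => ⟨h.subset_wordDomain hx, x, hx, rfl⟩

lemma dist_lt_of_word_eq (h : ExpandingColoring f X κ r γ c n) (hy : y ∈ wordDomain f X γ n)
    (hz : z ∈ wordDomain f X γ n) (hyz : word f c n y = word f c n z) : dist y z < γ / 2 := by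
  rw [word_eq_word_iff] at hyz
  have hd : ∀ j ≤ n, dist (f^[j] y) (f^[j] z) < r := fun j hj =>
    h.dist_lt_of_eq _ (hy j hj) _ (hz j hj) (hyz j hj)
  have hpow := h.pow_mul_dist_le n (fun j hj => thickening_mono h.le X (hy j hj.le))
    fun j hj => hd j hj.le
  exact lt_of_mul_lt_mul_left (hpow.trans_lt ((hd n le_rfl).trans h.depth))
    (pow_pos h.kappa_pos n).le

lemma wordNhd_subset_thickening_half (h : ExpandingColoring f X κ r γ c n) :
    wordNhd f X γ c n ⊆ thickening (γ / 2) X := by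
  rintro z ⟨hz, x, hx, hzx⟩
  exact mem_thickening_iff.mpr ⟨x, hx, h.dist_lt_of_word_eq hz (h.subset_wordDomain hx) hzx⟩

lemma eventually_word_eq (h : ExpandingColoring f X κ r γ c n) (hz : z ∈ wordDomain f X γ n) :
    ∀ᶠ z' in 𝓝 z, z' ∈ wordDomain f X γ n ∧ word f c n z' = word f c n z := by
  have hnear : ∀ᶠ z' in 𝓝 z, ∀ j ≤ n,
      f^[j] z' ∈ thickening γ X ∧ dist (f^[j] z') (f^[j] z) < γ :=
    (eventually_all_finite (finite_Iic n)).mpr fun j hj =>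
      (h.continuous.iterate j).continuousAt.eventually
        ((isOpen_thickening.eventually_mem (hz j hj)).and (ball_mem_nhds _ h.pos))
  filter_upwards [hnear] with z' hz'
  exact ⟨fun j hj => (hz' j hj).1, word_eq_word_iff.mpr fun j hj =>
    h.eq_of_dist_lt _ (hz' j hj).1 _ (hz j hj) (hz' j hj).2⟩

lemma isOpen_wordNhd (h : ExpandingColoring f X κ r γ c n) : IsOpen (wordNhd f X γ c n) := by
  rw [isOpen_iff_mem_nhds]
  rintro z ⟨hz, x, hx, hzx⟩
  filter_upwards [h.eventually_word_eq hz] with z' hz'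
  exact ⟨hz'.1, x, hx, hz'.2.trans hzx⟩

lemma isClosed_survivorSet (h : ExpandingColoring f X κ r γ c n) :
    IsClosed (survivorSet f (wordNhd f X γ c n)) := by
  refine isClosed_of_closure_subset fun z hz i => ?_
  have hcl : ∀ j, f^[j] z ∈ closure (survivorSet f (wordNhd f X γ c n)) := fun j =>
    (mapsTo_survivorSet.iterate j).closure (h.continuous.iterate j) hz
  have hhalf : closure (survivorSet f (wordNhd f X γ c n)) ⊆ thickening γ X :=
    (closure_mono (survivorSet_subset.trans h.wordNhd_subset_thickening_half)).trans
      ((closure_thickening_subset_cthickening _ X).trans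
        (cthickening_subset_thickening' h.pos (half_lt_self h.pos) X))
  have hdom : f^[i] z ∈ wordDomain f X γ n := fun j _ => by
    rw [← Function.iterate_add_apply]
    exact hhalf (hcl (j + i))
  obtain ⟨z', hz', -, hword⟩ := ((mem_closure_iff_frequently.mp (hcl i)).and_eventually
    (h.eventually_word_eq hdom)).exists
  obtain ⟨-, x, hx, hzx⟩ := survivorSet_subset hz'
  exact ⟨hdom, x, hx, hword.symm.trans hzx⟩

lemma isTotallyDisconnected_survivorSet (h : ExpandingColoring f X κ r γ c n) :
    IsTotallyDisconnected (survivorSet f (thickening γ X)) := by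
  intro C hC hpre u hu v hv
  refine h.eq_of_forall_dist_iterate_lt (fun j => thickening_mono h.le X (hC hu j)) fun j =>
    h.dist_lt_of_eq _ (hC hu j) _ (hC hv j) ?_
  exact h.eq_of_isPreconnected (hpre.image _ (h.continuous.iterate j).continuousOn)
    (image_subset_iff.mpr fun z hz => hC hz j) (mem_image_of_mem _ hu) (mem_image_of_mem _ hv)

lemma exists_lift (h : ExpandingColoring f X κ r γ c n)
    (hy : y ∈ survivorSet f (wordNhd f X γ c n)) (hz : z ∈ survivorSet f (wordNhd f X γ c n))
    (hyz : word f c n (f y) = word f c n z) :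
    ∃ w ∈ survivorSet f (wordNhd f X γ c n), f w = z ∧ word f c n y = word f c n w ∧
      κ * dist y w ≤ dist (f y) z := by
  have hlt : dist (f y) z < γ / 2 := h.dist_lt_of_word_eq
    (survivorSet_subset_wordDomain (mapsTo_survivorSet hy)) (survivorSet_subset_wordDomain hz) hyz
  have hγ : γ / 2 < γ := half_lt_self h.pos
  have hyγ : y ∈ thickening γ X := wordNhd_subset (hy 0)
  obtain ⟨w, rfl, hyw⟩ := h.lift y (thickening_mono h.le X hyγ) z (hlt.trans (hγ.trans_le h.le))
  have hdyw : dist y w < γ / 2 := h.dist_lt_of_mul_le dist_nonneg hyw hlt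
  have hwγ : w ∈ thickening γ X := by
    obtain ⟨x, hx, hyx⟩ := mem_thickening_iff.mp (h.wordNhd_subset_thickening_half (hy 0))
    exact mem_thickening_iff.mpr ⟨x, hx, (dist_triangle_left w x y).trans_lt
      ((add_lt_add hdyw hyx).trans_eq (add_halves γ))⟩
  have hword : word f c n y = word f c n w := by
    rw [word_eq_word_iff] at hyz ⊢
    rintro (_ | j) hj
    · exact h.eq_of_dist_lt _ hyγ _ hwγ (hdyw.trans hγ)
    · exact hyz j (by omega)
  have hw : w ∈ wordNhd f X γ c n := by
    refine ⟨?_, (survivorSet_subset hy).2.imp fun x hx => ⟨hx.1, hword.symm.trans hx.2⟩⟩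
    rintro (_ | j) -
    · exact hwγ
    · exact wordNhd_subset (hz j)
  exact ⟨w, mem_survivorSet_of_apply hw hz, rfl, hword, hyw⟩

lemma exists_lift_iterate (h : ExpandingColoring f X κ r γ c n) (m : ℕ)
    (hy : y ∈ survivorSet f (wordNhd f X γ c n)) (hz : z ∈ survivorSet f (wordNhd f X γ c n))
    (hyz : word f c n (f^[m] y) = word f c n z) :
    ∃ w ∈ survivorSet f (wordNhd f X γ c n), f^[m] w = z ∧ word f c n y = word f c n w ∧
      κ ^ m * dist y w ≤ dist (f^[m] y) z := by
  induction m generalizing y with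
  | zero => exact ⟨z, hz, rfl, hyz, by simp⟩
  | succ m ih =>
    obtain ⟨w, hw, rfl, hword, hd⟩ := ih (mapsTo_survivorSet hy) hyz
    obtain ⟨w', hw', rfl, hword', hd'⟩ := h.exists_lift hy hw hword
    refine ⟨w', hw', rfl, hword', ?_⟩
    calc κ ^ (m + 1) * dist y w' = κ ^ m * (κ * dist y w') := by ring
      _ ≤ κ ^ m * dist (f y) (f w') :=
          mul_le_mul_of_nonneg_left hd' (pow_pos h.kappa_pos m).le
      _ ≤ dist (f^[m + 1] y) (f^[m] (f w')) := hd

lemma image_survivorSet (h : ExpandingColoring f X κ r γ c n) (hX : f '' X = X) :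
    f '' survivorSet f (wordNhd f X γ c n) = survivorSet f (wordNhd f X γ c n) := by
  refine mapsTo_survivorSet.image_subset.antisymm fun z hz => ?_
  obtain ⟨-, x, hx, hzx⟩ := survivorSet_subset hz
  obtain ⟨a, ha, rfl⟩ := hX.ge hx
  obtain ⟨w, hw, hwz, -⟩ :=
    h.exists_lift (subset_survivorSet h.mapsTo h.subset_wordNhd ha) hz hzx.symm
  exact ⟨w, hw, hwz⟩

lemma exists_mem_nhdsSet_diagonal_word_eq (h : ExpandingColoring f X κ r γ c n) :
    ∃ D ∈ 𝓝ˢ (diagonal S), ∀ u ∈ X, ∀ v ∈ X, (u, v) ∈ D → word f c n u = word f c n v := by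
  refine ⟨{p | ∀ j ∈ Iic n, dist (f^[j] p.1) (f^[j] p.2) < γ}, ?_, fun u hu v hv huv =>
    word_eq_word_iff.mpr fun j hj => h.eq_of_dist_lt _ (h.subset_wordDomain hu j hj) _
      (h.subset_wordDomain hv j hj) (huv j hj)⟩
  refine (eventually_all_finite (finite_Iic n)).mpr fun j _ => ?_
  have hj := h.continuous.iterate j
  refine (isOpen_lt ((hj.comp continuous_fst).dist (hj.comp continuous_snd))
    continuous_const).mem_nhdsSet.mpr ?_
  rintro ⟨u, v⟩ (rfl : u = v)
  simpa using h.pos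

lemma exists_iterate_eq_of_chain (h : ExpandingColoring f X κ r γ c n) {D : Set (S × S)}
    (hD : ∀ u ∈ X, ∀ v ∈ X, (u, v) ∈ D → word f c n u = word f c n v) {a b : S}
    (hab : Relation.ReflTransGen (ChainStep f X D) a b)
    (hz : z ∈ survivorSet f (wordNhd f X γ c n)) (hbz : word f c n b = word f c n z) :
    ∃ m, ∃ y ∈ survivorSet f (wordNhd f X γ c n), f^[m] y = z ∧
      word f c n a = word f c n y := by
  induction hab using Relation.ReflTransGen.head_induction_on with
  | refl => exact ⟨0, z, hz, rfl, hbz⟩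
  | head huv _ ih =>
    obtain ⟨hu, hv, huvD⟩ := huv
    obtain ⟨m, y, hy, hyz, hvy⟩ := ih
    obtain ⟨w, hw, rfl, huw, -⟩ := h.exists_lift (subset_survivorSet h.mapsTo h.subset_wordNhd hu)
      hy ((hD _ (h.mapsTo hu) _ hv huvD).trans hvy)
    exact ⟨m + 1, w, hw, hyz, huw⟩

lemma transitiveOn_survivorSet (h : ExpandingColoring f X κ r γ c n)
    (hX : ChainTransitiveOn f X) : TransitiveOn f (survivorSet f (wordNhd f X γ c n)) := by
  rintro U V hU - ⟨z₁, hz₁U, hz₁⟩ ⟨z₂, hz₂V, hz₂⟩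
  obtain ⟨D, hD, hDword⟩ := h.exists_mem_nhdsSet_diagonal_word_eq
  obtain ⟨ε, hε, hεU⟩ := Metric.isOpen_iff.mp hU z₁ hz₁U
  obtain ⟨M, hM⟩ := h.exists_lt_pow_mul hε (γ / 2)
  have hfz₁ := mapsTo_survivorSet.iterate M hz₁
  obtain ⟨-, a, ha, hza⟩ := survivorSet_subset hfz₁
  obtain ⟨-, b, hb, hzb⟩ := survivorSet_subset hz₂
  obtain ⟨m, y, hy, hyz, hay⟩ :=
    h.exists_iterate_eq_of_chain hDword (hX D hD a ha b hb) hz₂ hzb.symm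
  have hlt := h.dist_lt_of_word_eq (survivorSet_subset_wordDomain hfz₁)
    (survivorSet_subset_wordDomain hy) (hza.trans hay)
  obtain ⟨w, hw, rfl, -, hd⟩ := h.exists_lift_iterate M hz₁ hy (hza.trans hay)
  have hz₁w : dist z₁ w < ε :=
    lt_of_mul_lt_mul_left (hd.trans_lt (hlt.trans hM)) (pow_pos h.kappa_pos M).le
  exact ⟨m + M, z₂, ⟨w, ⟨hεU (mem_ball'.mpr hz₁w), hw⟩,
    by rw [Function.iterate_add_apply, hyz]⟩, hz₂V⟩

end ExpandingColoring

lemma LocallyExpanding.exists_expandingColoring {S : Type*} [MetricSpace S] {f : S → S}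
    {X : Set S} {κ r δ : ℝ} (h : LocallyExpanding f X κ r) (hf : Continuous f) (hX : IsCompact X)
    (hmaps : MapsTo f X X) (htd : IsTotallyDisconnected X) (hδ : 0 < δ) :
    ∃ γ ≤ δ, ∃ (c : S → ℕ) (n : ℕ), ExpandingColoring f X κ r γ c n := by
  obtain ⟨γ₀, c, hc⟩ := exists_isColoring hX htd h.r_pos
  set γ := min γ₀ (min r δ)
  have hγ : 0 < γ := lt_min hc.pos (lt_min h.r_pos hδ)
  obtain ⟨n, hn⟩ := h.exists_lt_pow_mul (half_pos hγ) r
  exact ⟨γ, (min_le_right _ _).trans (min_le_right _ _), c, n,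
    { toLocallyExpanding := h
      toIsColoring := hc.mono hγ (min_le_left _ _)
      continuous := hf
      mapsTo := hmaps
      le := (min_le_right _ _).trans (min_le_left _ _)
      depth := hn }⟩

/-- `f` is locally expanding near `X` for some metric inducing the topology. -/
def TopExpanding {S : Type*} [t : TopologicalSpace S] (f : S → S) (X : Set S) : Prop :=
  ∃ M : MetricSpace S, M.toUniformSpace.toTopologicalSpace = t ∧
    ∃ κ r, @LocallyExpanding S M f X κ r

theorem TopExpanding.exists_survivorSet {S : Type*} [TopologicalSpace S] {f : S → S} {X O : Set S}
    (h : TopExpanding f X) (hf : Continuous f) (hX : IsCompact X) (hfX : f '' X = X)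
    (htd : IsTotallyDisconnected X) (hO : IsOpen O) (hXO : X ⊆ O) :
    ∃ W ⊆ O, IsOpen W ∧ X ⊆ survivorSet f W ∧ IsClosed (survivorSet f W) ∧
      f '' survivorSet f W = survivorSet f W ∧ IsTotallyDisconnected (survivorSet f W) ∧
      (ChainTransitiveOn f X → TransitiveOn f (survivorSet f W)) := by
  obtain ⟨M, rfl, κ, r, h⟩ := h
  obtain ⟨δ, hδ, hδO⟩ := hX.exists_thickening_subset_open hO hXO
  have hmaps : MapsTo f X X := mapsTo_iff_image_subset.mpr hfX.subset
  obtain ⟨γ, hγδ, c, n, h⟩ := h.exists_expandingColoring hf hX hmaps htd hδ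
  have hsub : wordNhd f X γ c n ⊆ thickening γ X := wordNhd_subset
  exact ⟨wordNhd f X γ c n, hsub.trans ((thickening_mono hγδ X).trans hδO), h.isOpen_wordNhd,
    subset_survivorSet hmaps h.subset_wordNhd, h.isClosed_survivorSet, h.image_survivorSet hfX,
    fun C hC => h.isTotallyDisconnected_survivorSet C (hC.trans (survivorSet_mono hsub)),
    h.transitiveOn_survivorSet⟩

/-! ### Markov covers -/

lemma eq_of_ncard_image_le {α β γ : Type*} {s : Set α} {F : α → β} {G : α → γ}
    (hfin : (F '' s).Finite) (hFG : ∀ x ∈ s, ∀ y ∈ s, F x = F y → G x = G y)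
    (hcard : (F '' s).ncard ≤ (G '' s).ncard) {x y : α} (hx : x ∈ s) (hy : y ∈ s)
    (hxy : G x = G y) : F x = F y := by
  have : Nonempty α := ⟨x⟩
  let φ : β → γ := fun b => G (Function.invFunOn F s b)
  have hφ : ∀ z ∈ s, φ (F z) = G z := fun z hz =>
    have hFz : ∃ a ∈ s, F a = F z := ⟨z, hz, rfl⟩
    hFG _ (Function.invFunOn_mem hFz) z hz (Function.invFunOn_eq hFz)
  have hφs : φ '' (F '' s) = G '' s := by rw [image_image, image_congr hφ]
  have hinj : InjOn φ (F '' s) :=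
    injOn_of_ncard_image_eq ((ncard_image_le hfin).antisymm (hφs ▸ hcard)) hfin
  exact hinj (mem_image_of_mem F hx) (mem_image_of_mem F hy) (by rw [hφ x hx, hφ y hy, hxy])

/-- The connected component of `x` in the `η`-neighbourhood of `Λ`. -/
def cell {S : Type*} [PseudoMetricSpace S] (Λ : Set S) (η : ℝ) (x : S) : Set S :=
  connectedComponentIn (thickening η Λ) x

section cell

variable {S : Type*} [PseudoMetricSpace S] {Λ : Set S} {η η₁ η₂ : ℝ} {x y : S}

lemma cell_subset : cell Λ η x ⊆ thickening η Λ := connectedComponentIn_subset _ _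

lemma mem_cell_self (hη : 0 < η) (hx : x ∈ Λ) : x ∈ cell Λ η x :=
  mem_connectedComponentIn (self_subset_thickening hη Λ hx)

lemma cell_eq (h : y ∈ cell Λ η x) : cell Λ η x = cell Λ η y := connectedComponentIn_eq h

lemma closure_cell_subset (h₁ : 0 < η₁) (h₁₂ : η₁ < η₂) (hx : x ∈ Λ) :
    closure (cell Λ η₁ x) ⊆ cell Λ η₂ x :=
  isPreconnected_connectedComponentIn.closure.subset_connectedComponentIn
    (subset_closure (mem_cell_self h₁ hx)) <|
    (closure_mono cell_subset).trans <| (closure_thickening_subset_cthickening _ _).trans <|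
      cthickening_subset_thickening' (h₁.trans h₁₂) h₁₂ _

lemma isOpen_cell [LocallyConnectedSpace S] : IsOpen (cell Λ η x) :=
  isOpen_thickening.connectedComponentIn

lemma finite_image_cell [LocallyConnectedSpace S] (hΛ : IsCompact Λ) (hη : 0 < η) :
    (cell Λ η '' Λ).Finite := by
  obtain ⟨t, -, ht⟩ := hΛ.elim_nhds_subcover (cell Λ η)
    fun x hx => isOpen_cell.mem_nhds (mem_cell_self hη hx)
  refine (t.finite_toSet.image (cell Λ η)).subset ?_
  rintro _ ⟨x, hx, rfl⟩
  obtain ⟨y, hy, hxy⟩ := mem_iUnion₂.mp (ht hx)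
  exact ⟨y, hy, cell_eq hxy⟩

-- The number of cells is nonincreasing in the scale, so it is constant between some `η₁ < η₂`.
lemma exists_pairwiseDisjoint_closure_cell [LocallyConnectedSpace S] (hΛ : IsCompact Λ) {η₀ : ℝ}
    (hη₀ : 0 < η₀) : ∃ η₁ η₂ : ℝ, 0 < η₁ ∧ η₁ < η₂ ∧ η₂ < η₀ ∧
      (cell Λ η₁ '' Λ).PairwiseDisjoint closure := by
  let N : Set ℕ := (fun η => (cell Λ η '' Λ).ncard) '' Ioo 0 η₀
  have hN : N.Nonempty := (nonempty_Ioo.mpr hη₀).image _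
  obtain ⟨η₁, ⟨h₁, h₁₀⟩, hmin : (cell Λ η₁ '' Λ).ncard = sInf N⟩ := Nat.sInf_mem hN
  obtain ⟨η₂, h₁₂, h₂₀⟩ := exists_between h₁₀
  have hcard : (cell Λ η₁ '' Λ).ncard ≤ (cell Λ η₂ '' Λ).ncard :=
    hmin.trans_le (Nat.sInf_le ⟨η₂, ⟨h₁.trans h₁₂, h₂₀⟩, rfl⟩)
  have hcell : ∀ x ∈ Λ, ∀ z ∈ closure (cell Λ η₁ x), cell Λ η₂ x = cell Λ η₂ z :=
    fun x hx z hz => cell_eq (closure_cell_subset h₁ h₁₂ hx hz)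
  refine ⟨η₁, η₂, h₁, h₁₂, h₂₀, ?_⟩
  rintro _ ⟨x, hx, rfl⟩ _ ⟨y, hy, rfl⟩ hne
  refine disjoint_left.mpr fun z hzx hzy => hne ?_
  refine eq_of_ncard_image_le (finite_image_cell hΛ h₁) (fun a ha b hb hab => ?_) hcard hx hy
    ((hcell x hx z hzx).trans (hcell y hy z hzy).symm)
  exact hcell a ha b (subset_closure (hab ▸ mem_cell_self h₁ hb))

lemma IsColoring.dist_lt_of_mem_closure_cell {ι : Type*} {γ δ : ℝ} {c : S → ι}
    (h : IsColoring Λ γ δ c) (h₁ : 0 < η₁) (h₁₂ : η₁ < η₂) (h₂ : η₂ ≤ γ) (hx : x ∈ Λ) {u v : S}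
    (hu : u ∈ closure (cell Λ η₁ x)) (hv : v ∈ closure (cell Λ η₁ x)) : dist u v < δ := by
  have hsub : cell Λ η₂ x ⊆ thickening γ Λ := cell_subset.trans (thickening_mono h₂ Λ)
  replace hu := closure_cell_subset h₁ h₁₂ hx hu
  replace hv := closure_cell_subset h₁ h₁₂ hx hv
  exact h.dist_lt_of_eq u (hsub hu) v (hsub hv)
    (h.eq_of_isPreconnected isPreconnected_connectedComponentIn hsub hu hv)

end cell

/-- A finite cover of `Λ` by connected open sets with disjoint closures on which `f` is injective
and has an inverse branch for every transition made by a point of `Λ`: a graph directed system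
with the strong separation condition, except for bounded distortion. -/
structure MarkovCover {S : Type*} [TopologicalSpace S] (f : S → S) (Λ : Set S)
    (𝒰 : Set (Set S)) : Prop where
  finite : 𝒰.Finite
  isOpen : ∀ U ∈ 𝒰, IsOpen U
  isConnected : ∀ U ∈ 𝒰, IsConnected U
  disjoint_closure : 𝒰.PairwiseDisjoint closure
  exists_mem : ∀ x ∈ Λ, ∃ U ∈ 𝒰, x ∈ U
  injOn : ∀ U ∈ 𝒰, InjOn f U
  exists_branch : ∀ x ∈ Λ, ∀ U ∈ 𝒰, ∀ V ∈ 𝒰, x ∈ U → f x ∈ V →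
    ∃ g : S → S, MapsTo g (closure V) U ∧ ∀ v ∈ closure V, f (g v) = v

namespace LocallyExpanding

variable {S : Type*} [MetricSpace S] {f : S → S} {X W : Set S} {κ r η : ℝ} {u v x : S}

lemma eq_of_apply_eq (h : LocallyExpanding f X κ r) (hu : u ∈ thickening r X) (huv : dist u v < r)
    (hfuv : f u = f v) : u = v := by
  have hle := h.expand u hu v huv
  rw [hfuv, dist_self] at hle
  exact dist_le_zero.mp (nonpos_of_mul_nonpos_right hle h.kappa_pos)

lemma exists_branch (h : LocallyExpanding f X κ r) (hx : x ∈ X) :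
    ∃ g : S → S, ContinuousOn g (ball (f x) (r / 2)) ∧ g (f x) = x ∧
      ∀ v ∈ ball (f x) (r / 2), f (g v) = v ∧ dist (g v) x < r / 2 := by
  have hxr : x ∈ thickening r X := self_subset_thickening h.r_pos X hx
  have hr : r / 2 < r := half_lt_self h.r_pos
  choose! g hgf hgx using fun v (hv : v ∈ ball (f x) (r / 2)) =>
    h.lift x hxr v ((mem_ball'.mp hv).trans hr)
  have hgx' : ∀ v ∈ ball (f x) (r / 2), dist (g v) x < r / 2 := fun v hv => by
    rw [dist_comm]
    exact h.dist_lt_of_mul_le dist_nonneg (hgx v hv) (mem_ball'.mp hv)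
  have hlip : LipschitzOnWith 1 g (ball (f x) (r / 2)) := by
    refine LipschitzOnWith.of_dist_le_mul fun v hv v' hv' => ?_
    have hexp := h.expand (g v) (mem_thickening_iff.mpr ⟨x, hx, (hgx' v hv).trans hr⟩) (g v')
      ((dist_triangle_right _ _ x).trans_lt
        ((add_lt_add (hgx' v hv) (hgx' v' hv')).trans_eq (add_halves r)))
    rw [hgf v hv, hgf v' hv'] at hexp
    simpa only [NNReal.coe_one, one_mul] using
      (le_mul_of_one_le_left dist_nonneg h.one_lt.le).trans hexp
  have hfx : f x ∈ ball (f x) (r / 2) := mem_ball_self (half_pos h.r_pos)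
  have hgfx : dist x (g (f x)) < r := by linarith [hgx' _ hfx, dist_comm x (g (f x))]
  exact ⟨g, hlip.continuousOn, (h.eq_of_apply_eq hxr hgfx (hgf _ hfx).symm).symm,
    fun v hv => ⟨hgf v hv, hgx' v hv⟩⟩

lemma mem_thickening_of_apply_mem_cthickening (h : LocallyExpanding f (survivorSet f W) κ r)
    (hW : thickening r (survivorSet f W) ⊆ W) (hη : 0 < η) (hηr : η ≤ r / 2)
    (hu : u ∈ thickening (r / 2) (survivorSet f W))
    (hfu : f u ∈ cthickening η (survivorSet f W)) : u ∈ thickening η (survivorSet f W) := by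
  have hr := h.r_pos
  have hη' : η < min (κ * η) r :=
    lt_min (lt_mul_of_one_lt_left hη h.one_lt) (hηr.trans_lt (half_lt_self hr))
  obtain ⟨a, ha, hda⟩ := mem_thickening_iff.mp
    (cthickening_subset_thickening' (hη.trans hη') hη' _ hfu)
  obtain ⟨w, rfl, huw⟩ := h.lift u (thickening_mono (half_le_self hr.le) _ hu) a
    (hda.trans_le (min_le_right _ _))
  have hdist : dist u w < η :=
    lt_of_mul_lt_mul_left (huw.trans_lt (hda.trans_le (min_le_left _ _))) h.kappa_pos.le
  obtain ⟨b, hb, hdb⟩ := mem_thickening_iff.mp hu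
  have hwW : w ∈ W := hW (mem_thickening_iff.mpr ⟨b, hb, by
    linarith [dist_triangle_left w b u]⟩)
  exact mem_thickening_iff.mpr ⟨w, mem_survivorSet_of_apply hwW ha, hdist⟩

lemma exists_cell_branch (h : LocallyExpanding f (survivorSet f W) κ r)
    (hW : thickening r (survivorSet f W) ⊆ W) (hη : 0 < η) (hηr : η ≤ r / 2)
    (hx : x ∈ survivorSet f W)
    (hsmall : closure (cell (survivorSet f W) η (f x)) ⊆ ball (f x) (r / 2)) :
    ∃ g : S → S, MapsTo g (closure (cell (survivorSet f W) η (f x))) (cell (survivorSet f W) η x) ∧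
      ∀ v ∈ closure (cell (survivorSet f W) η (f x)), f (g v) = v := by
  obtain ⟨g, hg, hgx, hgv⟩ := h.exists_branch hx
  refine ⟨g, mapsTo_iff_image_subset.mpr ?_, fun v hv => (hgv v (hsmall hv)).1⟩
  have hpre : IsPreconnected (g '' closure (cell (survivorSet f W) η (f x))) :=
    isPreconnected_connectedComponentIn.closure.image g (hg.mono hsmall)
  refine hpre.subset_connectedComponentIn
    ⟨f x, subset_closure (mem_cell_self hη (mapsTo_survivorSet hx)), hgx⟩ ?_
  rintro _ ⟨v, hv, rfl⟩
  obtain ⟨hfgv, hdist⟩ := hgv v (hsmall hv)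
  refine h.mem_thickening_of_apply_mem_cthickening hW hη hηr
    (mem_thickening_iff.mpr ⟨x, hx, hdist⟩) ?_
  rw [hfgv]
  exact closure_thickening_subset_cthickening _ _ (closure_mono cell_subset hv)

lemma markovCover [LocallyConnectedSpace S] {ι : Type*} {γ η' : ℝ} {c : S → ι}
    (h : LocallyExpanding f (survivorSet f W) κ r) (hW : thickening r (survivorSet f W) ⊆ W)
    (hc : IsColoring (survivorSet f W) γ (r / 2) c) (hΛ : IsCompact (survivorSet f W))
    (hη : 0 < η) (hηη' : η < η') (hη'γ : η' ≤ γ) (hηr : η ≤ r / 2)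
    (hdisj : (cell (survivorSet f W) η '' survivorSet f W).PairwiseDisjoint closure) :
    MarkovCover f (survivorSet f W) (cell (survivorSet f W) η '' survivorSet f W) where
  finite := finite_image_cell hΛ hη
  isOpen := forall_mem_image.mpr fun _ _ => isOpen_cell
  isConnected := forall_mem_image.mpr fun _ hx =>
    isConnected_connectedComponentIn_iff.mpr (self_subset_thickening hη _ hx)
  disjoint_closure := hdisj
  exists_mem x hx := ⟨_, mem_image_of_mem _ hx, mem_cell_self hη hx⟩
  injOn := forall_mem_image.mpr fun _ hx _ hu _ hv huv => h.eq_of_apply_eq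
    (thickening_mono (hηr.trans (half_le_self h.r_pos.le)) _ (cell_subset hu))
    ((hc.dist_lt_of_mem_closure_cell hη hηη' hη'γ hx (subset_closure hu)
      (subset_closure hv)).trans (half_lt_self h.r_pos)) huv
  exists_branch := by
    rintro x hx _ ⟨y, -, rfl⟩ _ ⟨z, -, rfl⟩ hxy hxz
    rw [cell_eq hxy, cell_eq hxz]
    have hfx := mapsTo_survivorSet hx
    exact h.exists_cell_branch hW hη hηr hx fun v hv => hc.dist_lt_of_mem_closure_cell hη hηη'
      hη'γ hfx hv (subset_closure (mem_cell_self hη hfx))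

end LocallyExpanding

theorem TopExpanding.exists_markovCover {S : Type*} [TopologicalSpace S] [LocallyConnectedSpace S]
    {f : S → S} {W : Set S} (h : TopExpanding f (survivorSet f W)) (hW : IsOpen W)
    (hΛ : IsCompact (survivorSet f W)) (htd : IsTotallyDisconnected (survivorSet f W)) :
    ∃ 𝒰, MarkovCover f (survivorSet f W) 𝒰 ∧ ∀ U ∈ 𝒰, U ⊆ W := by
  obtain ⟨M, rfl, κ, r₀, h⟩ := h
  obtain ⟨ρ, hρ, hρW⟩ := hΛ.exists_thickening_subset_open hW survivorSet_subset
  set r := min r₀ ρ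
  have hr : 0 < r := lt_min h.r_pos hρ
  have hrW : thickening r (survivorSet f W) ⊆ W :=
    (thickening_mono (min_le_right _ _) _).trans hρW
  obtain ⟨γ, c, hc⟩ := exists_isColoring hΛ htd (half_pos hr)
  obtain ⟨η₁, η₂, h₁, h₁₂, h₂, hdisj⟩ :=
    exists_pairwiseDisjoint_closure_cell hΛ (lt_min hc.pos (half_pos hr))
  have h₁r : η₁ ≤ r / 2 := h₁₂.le.trans (h₂.le.trans (min_le_right _ _))
  refine ⟨_, (h.mono hr (min_le_left _ _) (thickening_mono (min_le_left _ _) _)).markovCover hrW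
    hc hΛ h₁ h₁₂ (h₂.le.trans (min_le_left _ _)) h₁r hdisj, forall_mem_image.mpr fun x _ => ?_⟩
  exact cell_subset.trans ((thickening_mono (h₁r.trans (half_le_self hr.le)) _).trans hrW)

/-! ### Total disconnectedness of injectively labelled expanding sets -/

lemma exists_pos_forall_dist_lt {S T ι : Type*} [PseudoMetricSpace S] [MetricSpace T]
    [TopologicalSpace ι] [T2Space ι] {f : S → T} {idx : S → ι} {Λ : Set S} (hΛ : IsCompact Λ)
    (hclosed : IsClosed Λ) (hf : ContinuousOn f Λ) (hidx : ContinuousOn idx Λ)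
    (hinj : ∀ u ∈ Λ, ∀ v ∈ Λ, idx u = idx v → f u = f v → u = v) {r : ℝ} (hr : 0 < r) :
    ∃ β > 0, ∀ u ∈ Λ, ∀ v ∈ Λ, idx u = idx v → dist (f u) (f v) < β → dist u v < r := by
  have hfst : MapsTo Prod.fst (Λ ×ˢ Λ) Λ := fun _ hp => hp.1
  have hsnd : MapsTo Prod.snd (Λ ×ˢ Λ) Λ := fun _ hp => hp.2
  let F : Set (S × S) := (Λ ×ˢ Λ) ∩ (fun p => (idx p.1, idx p.2)) ⁻¹' diagonal ι ∩
    {p | r ≤ dist p.1 p.2}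
  have hF : IsCompact F := by
    refine (hΛ.prod hΛ).of_isClosed_subset (IsClosed.inter ?_
      (isClosed_le continuous_const continuous_dist)) fun p hp => hp.1.1
    exact ((hidx.comp continuousOn_fst hfst).prodMk (hidx.comp continuousOn_snd hsnd))
      |>.preimage_isClosed_of_isClosed (hclosed.prod hclosed) isClosed_diagonal
  have hdist : ContinuousOn (fun p : S × S => dist (f p.1) (f p.2)) F :=
    (continuous_dist.comp_continuousOn ((hf.comp continuousOn_fst hfst).prodMk
      (hf.comp continuousOn_snd hsnd))).mono fun p hp => hp.1.1
  have hpos : ∀ p ∈ F, 0 < dist (f p.1) (f p.2) := by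
    rintro ⟨u, v⟩ ⟨⟨⟨hu, hv⟩, huv⟩, hle⟩
    refine dist_pos.mpr fun hfuv => ?_
    rw [mem_ofPred_eq, hinj u hu v hv huv hfuv, dist_self] at hle
    exact hr.not_ge hle
  obtain ⟨β, hβ, hle⟩ := hF.exists_forall_le' hdist hpos
  refine ⟨β, hβ, fun u hu v hv huv hlt => ?_⟩
  by_contra! hruv
  exact (hle (u, v) ⟨⟨⟨hu, hv⟩, huv⟩, hruv⟩).not_gt hlt

namespace LocallyExpanding

variable {S ι : Type*} [MetricSpace S] {f : S → S} {Λ C : Set S} {κ r β : ℝ} {idx : S → ι}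

lemma pow_mul_dist_le_of_dist_iterate_lt (h : LocallyExpanding f Λ κ r) (hmaps : MapsTo f Λ Λ)
    (hβ : ∀ u ∈ Λ, ∀ v ∈ Λ, idx u = idx v → dist (f u) (f v) < β → dist u v < r) (n : ℕ) {u v : S}
    (hu : u ∈ Λ) (hv : v ∈ Λ) (huv : ∀ i, idx (f^[i] u) = idx (f^[i] v))
    (hlt : dist (f^[n] u) (f^[n] v) < β) :
    κ ^ n * dist u v ≤ dist (f^[n] u) (f^[n] v) := by
  induction n generalizing u v with
  | zero => simp
  | succ n ih =>
    have hf : κ ^ n * dist (f u) (f v) ≤ dist (f^[n + 1] u) (f^[n + 1] v) :=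
      ih (hmaps hu) (hmaps hv) (fun i => huv (i + 1)) hlt
    have hflt : dist (f u) (f v) < β :=
      ((le_mul_of_one_le_left dist_nonneg (one_le_pow₀ h.one_lt.le)).trans hf).trans_lt hlt
    calc κ ^ (n + 1) * dist u v = κ ^ n * (κ * dist u v) := by ring
      _ ≤ κ ^ n * dist (f u) (f v) := mul_le_mul_of_nonneg_left
          (h.expand u (self_subset_thickening h.r_pos Λ hu) v (hβ u hu v hv (huv 0) hflt))
          (pow_pos h.kappa_pos n).le
      _ ≤ dist (f^[n + 1] u) (f^[n + 1] v) := hf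

-- Were a component nontrivial, more points of it than there are balls of radius `β / 2` in a cover
-- of `Λ` would be moved apart by a large iterate, although two of them land in the same ball.
lemma subsingleton_of_isPreconnected [TopologicalSpace ι] [DiscreteTopology ι]
    (h : LocallyExpanding f Λ κ r) (hf : Continuous f) (hΛ : IsCompact Λ) (hmaps : MapsTo f Λ Λ)
    (hidx : ContinuousOn idx Λ) (hβ : 0 < β)
    (hβr : ∀ u ∈ Λ, ∀ v ∈ Λ, idx u = idx v → dist (f u) (f v) < β → dist u v < r)
    (hCΛ : C ⊆ Λ) (hC : IsPreconnected C) : C.Subsingleton := by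
  by_contra hnt
  obtain ⟨t, -, ht, htΛ⟩ := hΛ.finite_cover_balls (half_pos hβ)
  obtain ⟨F, hFC, hFcard⟩ := (hC.infinite_of_nontrivial
    (not_subsingleton_iff.mp hnt)).exists_subset_card_eq (ht.toFinset.card + 2)
  have hsep : 0 < (F : Set S).infsep := F.finite_toSet.infsep_pos_iff_nontrivial.mpr
    (Finset.one_lt_card_iff_nontrivial.mp (by omega))
  obtain ⟨n, hn⟩ := h.exists_lt_pow_mul hsep β
  choose! y hyt hy using fun u (hu : u ∈ F) =>
    show ∃ y ∈ ht.toFinset, f^[n] u ∈ ball y (β / 2) by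
      simpa using htΛ (hmaps.iterate n (hCΛ (hFC hu)))
  obtain ⟨u, hu, v, hv, huv, hyuv⟩ :=
    Finset.exists_ne_map_eq_of_card_lt_of_maps_to (by omega : ht.toFinset.card < F.card) hyt
  have hidxuv : ∀ i, idx (f^[i] u) = idx (f^[i] v) := fun i =>
    (hC.image _ (hf.iterate i).continuousOn).constant
      (hidx.mono ((hmaps.iterate i).mono_left hCΛ).image_subset)
      (mem_image_of_mem _ (hFC hu)) (mem_image_of_mem _ (hFC hv))
  have hlt : dist (f^[n] u) (f^[n] v) < β :=
    (dist_triangle_right _ _ (y u)).trans_lt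
      ((add_lt_add (hy u hu) (hyuv ▸ hy v hv)).trans_eq (add_halves β))
  have hpow := h.pow_mul_dist_le_of_dist_iterate_lt hmaps hβr n (hCΛ (hFC hu)) (hCΛ (hFC hv))
    hidxuv hlt
  have hmul := mul_le_mul_of_nonneg_left (infsep_le_dist_of_mem hu hv huv)
    (pow_pos h.kappa_pos n).le
  linarith

end LocallyExpanding

theorem TopExpanding.isTotallyDisconnected {S ι : Type*} [TopologicalSpace S] [TopologicalSpace ι]
    [DiscreteTopology ι] {f : S → S} {Λ : Set S} {idx : S → ι} (h : TopExpanding f Λ)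
    (hf : Continuous f) (hΛ : IsCompact Λ) (hmaps : MapsTo f Λ Λ) (hidx : ContinuousOn idx Λ)
    (hinj : ∀ u ∈ Λ, ∀ v ∈ Λ, idx u = idx v → f u = f v → u = v) : IsTotallyDisconnected Λ := by
  obtain ⟨M, rfl, κ, r, h⟩ := h
  obtain ⟨β, hβ, hβr⟩ :=
    exists_pos_forall_dist_lt hΛ hΛ.isClosed hf.continuousOn hidx hinj h.r_pos
  exact fun C hCΛ hC => h.subsingleton_of_isPreconnected hf hΛ hmaps hidx hβ hβr hCΛ hC

/-! ### Adapted metrics -/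

lemma exists_pos_forall_exists_apply_eq {S T : Type*} [PseudoMetricSpace S] [PseudoMetricSpace T]
    {f : S → T} (hf : Continuous f) {X : Set S} (hX : IsCompact X)
    (hopen : ∀ x ∈ X, 𝓝 (f x) ≤ map f (𝓝 x)) {r : ℝ} (hr : 0 < r) :
    ∃ η > 0, ∀ u ∈ thickening η X, ∀ v, dist (f u) v < η → ∃ w, f w = v ∧ dist u w < r := by
  have hloc : ∀ x ∈ X, ∀ᶠ p : ℝ × S in 𝓝 (0, x), ∀ u, dist u p.2 < p.1 → ∀ v,
      dist (f u) v < p.1 → ∃ w, f w = v ∧ dist u w < r := by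
    intro x hx
    obtain ⟨ε, hε, hball⟩ := Metric.mem_nhds_iff.mp
      (hopen x hx (image_mem_map (ball_mem_nhds x (half_pos hr))))
    obtain ⟨θ, hθ, hfθ⟩ := Metric.continuousAt_iff.mp hf.continuousAt (ε / 2) (half_pos hε)
    let a := min (min (ε / 2) (θ / 2)) (r / 4)
    have ha : 0 < a := by positivity
    filter_upwards [prod_mem_nhds (gt_mem_nhds ha) (ball_mem_nhds x ha)]
    rintro ⟨η, y⟩ ⟨hη : η < a, hy : dist y x < a⟩ u hu v hv
    have haε : a ≤ ε / 2 := (min_le_left _ _).trans (min_le_left _ _)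
    have haθ : a ≤ θ / 2 := (min_le_left _ _).trans (min_le_right _ _)
    have har : a ≤ r / 4 := min_le_right _ _
    have hux := dist_triangle u y x
    obtain ⟨w, hw, rfl⟩ : v ∈ f '' ball x (r / 2) := hball <| by
      have := dist_triangle_left v (f x) (f u)
      have := hfθ (by linarith : dist u x < θ)
      rw [mem_ball]
      linarith
    have := dist_triangle_right u w x
    exact ⟨w, rfl, by linarith [mem_ball.mp hw]⟩
  obtain ⟨η, h, hη⟩ := ((hX.eventually_forall_of_forall_eventually (P := fun η y => ∀ u,
    dist u y < η → ∀ v, dist (f u) v < η → ∃ w, f w = v ∧ dist u w < r) hloc).filter_mono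
    nhdsWithin_le_nhds |>.and (self_mem_nhdsWithin (s := Ioi (0 : ℝ)))).exists
  refine ⟨η, hη, fun u hu => ?_⟩
  obtain ⟨x, hx, hux⟩ := mem_thickening_iff.mp hu
  exact h x hx u hux

lemma LocallyExpanding.of_expand {S : Type*} [MetricSpace S] {f : S → S} (hf : Continuous f)
    {X : Set S} (hX : IsCompact X) {κ r : ℝ} (hκ : 1 < κ) (hr : 0 < r)
    (hexp : ∀ u ∈ thickening r X, ∀ v, dist u v < r → κ * dist u v ≤ dist (f u) (f v))
    (hopen : ∀ x ∈ X, 𝓝 (f x) ≤ map f (𝓝 x)) : ∃ r' > 0, LocallyExpanding f X κ r' := by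
  obtain ⟨η, hη, hlift⟩ := exists_pos_forall_exists_apply_eq hf hX hopen hr
  have hr' : 0 < min r η := lt_min hr hη
  refine ⟨min r η, hr', hκ, hr', fun u hu v huv => ?_, fun u hu v huv => ?_⟩
  · exact hexp u (thickening_mono (min_le_left _ _) _ hu) v (huv.trans_le (min_le_left _ _))
  · obtain ⟨w, rfl, huw⟩ := hlift u (thickening_mono (min_le_right _ _) _ hu) v
      (huv.trans_le (min_le_right _ _))
    exact ⟨w, rfl, hexp u (thickening_mono (min_le_left _ _) _ hu) w huw⟩

/-- The adapted distance `∑ i < m, κ⁻ⁱ d(fⁱ u, fⁱ v)`, for which `f` expands by `κ` wherever `f^m`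
expands by `κ ^ m` for the original distance. -/
noncomputable def adaptedDist {S : Type*} [PseudoMetricSpace S] (f : S → S) (κ : ℝ) (m : ℕ)
    (u v : S) : ℝ :=
  ∑ i ∈ Finset.range m, (κ ^ i)⁻¹ * dist (f^[i] u) (f^[i] v)

section adaptedDist

variable {S : Type*} [PseudoMetricSpace S] {f : S → S} {κ : ℝ} {m : ℕ}

lemma adaptedDist_self (u : S) : adaptedDist f κ m u u = 0 := by simp [adaptedDist]

lemma adaptedDist_comm (u v : S) : adaptedDist f κ m u v = adaptedDist f κ m v u := by
  simp only [adaptedDist, dist_comm]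

lemma adaptedDist_triangle (hκ : 0 ≤ κ) (u v w : S) :
    adaptedDist f κ m u w ≤ adaptedDist f κ m u v + adaptedDist f κ m v w := by
  simp only [adaptedDist, ← Finset.sum_add_distrib, ← mul_add]
  gcongr
  exact dist_triangle _ _ _

lemma dist_le_adaptedDist (hκ : 0 ≤ κ) (hm : 0 < m) (u v : S) :
    dist u v ≤ adaptedDist f κ m u v := by
  simpa [adaptedDist] using Finset.single_le_sum
    (f := fun i => (κ ^ i)⁻¹ * dist (f^[i] u) (f^[i] v)) (fun i _ => by positivity)
    (Finset.mem_range.mpr hm)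

lemma continuous_adaptedDist_left (hf : Continuous f) (v : S) :
    Continuous fun u => adaptedDist f κ m u v :=
  continuous_finsetSum _ fun i _ => continuous_const.mul ((hf.iterate i).dist continuous_const)

lemma mul_adaptedDist_le (hκ : 0 < κ) {u v : S}
    (hexp : κ ^ m * dist u v ≤ dist (f^[m] u) (f^[m] v)) :
    κ * adaptedDist f κ m u v ≤ adaptedDist f κ m (f u) (f v) := by
  have hsum := Finset.sum_range_succ (fun i => (κ ^ i)⁻¹ * dist (f^[i] u) (f^[i] v)) m
  rw [Finset.sum_range_succ', pow_zero, inv_one, one_mul] at hsum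
  have hstep : κ * ∑ i ∈ Finset.range m, (κ ^ (i + 1))⁻¹ * dist (f^[i + 1] u) (f^[i + 1] v) =
      adaptedDist f κ m (f u) (f v) := by
    simp only [adaptedDist, Finset.mul_sum, Function.iterate_succ_apply]
    refine Finset.sum_congr rfl fun i _ => ?_
    rw [pow_succ]
    field_simp
  have hlast : dist u v ≤ (κ ^ m)⁻¹ * dist (f^[m] u) (f^[m] v) :=
    (le_inv_mul_iff₀ (pow_pos hκ m)).mpr hexp
  rw [← hstep]
  refine mul_le_mul_of_nonneg_left ?_ hκ.le
  simp only [Function.iterate_zero_apply] at hsum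
  simp only [adaptedDist]
  linarith

lemma mem_nhds_iff_adaptedDist (hf : Continuous f) (hκ : 0 ≤ κ) (hm : 0 < m) {x : S} {s : Set S} :
    s ∈ 𝓝 x ↔ ∃ ε > 0, {y | adaptedDist f κ m y x < ε} ⊆ s := by
  constructor
  · intro hs
    obtain ⟨ε, hε, hs⟩ := Metric.mem_nhds_iff.mp hs
    exact ⟨ε, hε, fun y hy => hs ((dist_le_adaptedDist hκ hm y x).trans_lt hy)⟩
  · rintro ⟨ε, hε, hs⟩
    refine mem_of_superset ((isOpen_lt (continuous_adaptedDist_left hf x)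
      continuous_const).mem_nhds ?_) hs
    rwa [mem_ofPred_eq, adaptedDist_self]

end adaptedDist

theorem TopExpanding.of_expand_iterate {S : Type*} [M₀ : MetricSpace S] {f : S → S}
    (hf : Continuous f) {X : Set S} (hX : IsCompact X) {κ r : ℝ} (hκ : 1 < κ) (hr : 0 < r) {m : ℕ}
    (hm : 0 < m) (hexp : ∀ u ∈ thickening r X, ∀ v, dist u v < r →
      κ ^ m * dist u v ≤ dist (f^[m] u) (f^[m] v))
    (hopen : ∀ x ∈ X, 𝓝 (f x) ≤ map f (𝓝 x)) : TopExpanding f X := by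
  have hκ0 : 0 < κ := zero_lt_one.trans hκ
  have hnhds : ∀ {x s}, s ∈ 𝓝 x ↔ ∃ ε > 0, {y | adaptedDist f κ m y x < ε} ⊆ s :=
    mem_nhds_iff_adaptedDist hf hκ0.le hm
  have hexpand : ∀ u, ∀ x ∈ X, adaptedDist f κ m u x < r → ∀ v, adaptedDist f κ m u v < r →
      κ * adaptedDist f κ m u v ≤ adaptedDist f κ m (f u) (f v) := fun u x hx hux v huv =>
    mul_adaptedDist_le hκ0 (hexp u
      (mem_thickening_iff.mpr ⟨x, hx, (dist_le_adaptedDist hκ0.le hm u x).trans_lt hux⟩) v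
      ((dist_le_adaptedDist hκ0.le hm u v).trans_lt huv))
  let M₁ : MetricSpace S :=
    { dist := adaptedDist f κ m
      dist_self := adaptedDist_self
      dist_comm := adaptedDist_comm
      dist_triangle := adaptedDist_triangle hκ0.le
      eq_of_dist_eq_zero := fun {u v} huv =>
        dist_le_zero.mp (huv ▸ dist_le_adaptedDist (f := f) hκ0.le hm u v) }
  have htop : M₀.toUniformSpace.toTopologicalSpace = M₁.toUniformSpace.toTopologicalSpace := by
    refine TopologicalSpace.ext_nhds fun x => Filter.ext fun s => ?_
    rw [hnhds, @Metric.mem_nhds_iff S M₁.toPseudoMetricSpace]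
    rfl
  let M : MetricSpace S := @MetricSpace.replaceTopology S
    M₀.toUniformSpace.toTopologicalSpace M₁ htop
  have hexpM : ∀ u ∈ @thickening S M.toPseudoEMetricSpace r X, ∀ v, M.dist u v < r →
      κ * M.dist u v ≤ M.dist (f u) (f v) := fun u hu =>
    let ⟨x, hx, hux⟩ := (@mem_thickening_iff _ S M.toPseudoMetricSpace _ _).mp hu
    hexpand u x hx hux
  obtain ⟨r', -, h⟩ := @LocallyExpanding.of_expand S M f hf X hX κ r hκ hr hexpM hopen
  exact ⟨M, rfl, κ, r', h⟩

/-! ### Bridges -/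

/-- `y` is a backward orbit of `f` converging to the set `K`. -/
structure BackwardOrbitTo {S : Type*} [TopologicalSpace S] (f : S → S) (K : Set S) (y : ℕ → S) :
    Prop where
  apply_succ : ∀ k, f (y (k + 1)) = y k
  tendsto : Tendsto y atTop (𝓝ˢ K)

lemma backward_dite {S : Type*} {f : S → S} {b u : ℕ → S} {n : ℕ} (hb : ∀ k, f (b (k + 1)) = b k)
    (hu : ∀ k, f (u (k + 1)) = u k) (hbu : u 0 = b n) (k : ℕ) :
    f (if k + 1 < n then b (k + 1) else u (k + 1 - n)) = if k < n then b k else u (k - n) := by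
  rcases lt_trichotomy (k + 1) n with hk | rfl | hk
  · rw [if_pos hk, if_pos (by omega), hb]
  · rw [if_neg (by omega), if_pos (by omega), Nat.sub_self, hbu, hb]
  · rw [if_neg (by omega), if_neg (by omega), Nat.sub_add_comm (by omega), hu]

lemma BackwardOrbitTo.splice {S : Type*} [TopologicalSpace S] {f : S → S} {K N : Set S}
    {b u : ℕ → S} {n : ℕ} (hb : ∀ k, f (b (k + 1)) = b k) (hbN : ∀ k, b k ∈ N)
    (hu : BackwardOrbitTo f K u) (huN : ∀ k, u k ∈ N) (hbu : u 0 = b n) :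
    ∃ y, y 0 = b 0 ∧ BackwardOrbitTo f K y ∧ ∀ k, y k ∈ N := by
  refine ⟨fun k => if k < n then b k else u (k - n), ?_, ⟨backward_dite hb hu.apply_succ hbu, ?_⟩,
    fun k => by dsimp only; split_ifs; exacts [hbN k, huN _]⟩
  · rcases n.eq_zero_or_pos with rfl | hn
    · simpa using hbu
    · simp only [if_pos hn]
  · refine (hu.tendsto.comp (tendsto_sub_atTop_nat n)).congr' ?_
    filter_upwards [eventually_ge_atTop n] with k hk
    exact (if_neg hk.not_gt).symm

namespace LocallyExpanding

variable {S : Type*} [MetricSpace S] {f : S → S} {K N : Set S} {κ r ρ : ℝ}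

lemma exists_apply_eq_dist_lt (h : LocallyExpanding f K κ r) (hfK : f '' K = K) (hρr : ρ ≤ r)
    {u a : S} (ha : a ∈ K) (hua : dist u a < ρ) :
    ∃ w, f w = u ∧ ∃ a' ∈ K, dist w a' < ρ ∧ κ * dist w a' ≤ dist u a := by
  obtain ⟨a', ha', rfl⟩ : a ∈ f '' K := hfK.symm ▸ ha
  obtain ⟨w, rfl, hw⟩ := h.lift a' (self_subset_thickening h.r_pos _ ha') u
    (by rw [dist_comm]; exact hua.trans_le hρr)
  rw [dist_comm a', dist_comm (f a')] at hw
  exact ⟨w, rfl, a', ha', h.dist_lt_of_mul_le dist_nonneg hw hua, hw⟩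

lemma exists_backwardOrbit_of_dist_lt (h : LocallyExpanding f K κ r) (hK : IsCompact K)
    (hfK : f '' K = K) (hρr : ρ ≤ r) {x : S} (hx : x ∈ thickening ρ K) :
    ∃ u, u 0 = x ∧ BackwardOrbitTo f K u ∧ ∀ k, u k ∈ thickening ρ K := by
  obtain ⟨a₀, ha₀, hxa₀⟩ := mem_thickening_iff.mp hx
  have : Nonempty S := ⟨x⟩
  choose! w hw a ha hlt hmul using fun (p : S × S) (hp : p.2 ∈ K ∧ dist p.1 p.2 < ρ) =>
    h.exists_apply_eq_dist_lt hfK hρr hp.1 hp.2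
  let s : ℕ → S × S := fun k => (fun p => (w p, a p))^[k] (x, a₀)
  have hs : ∀ k, s (k + 1) = (w (s k), a (s k)) := fun k => Function.iterate_succ_apply' _ _ _
  have hsK : ∀ k, (s k).2 ∈ K ∧ dist (s k).1 (s k).2 < ρ := by
    intro k
    induction k with
    | zero => exact ⟨ha₀, hxa₀⟩
    | succ k ih => rw [hs]; exact ⟨ha _ ih, hlt _ ih⟩
  have hpow : ∀ k, κ ^ k * dist (s k).1 (s k).2 ≤ dist x a₀ := by
    intro k
    induction k with
    | zero => simp [s]
    | succ k ih =>
      rw [hs, pow_succ, mul_assoc]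
      exact (mul_le_mul_of_nonneg_left (hmul _ (hsK k)) (pow_pos h.kappa_pos k).le).trans ih
  refine ⟨fun k => (s k).1, rfl, ⟨fun k => by rw [hs]; exact hw _ (hsK k), ?_⟩,
    fun k => mem_thickening_iff.mpr ⟨_, hsK k⟩⟩
  refine (hasBasis_nhdsSet_thickening hK).tendsto_right_iff.mpr fun ε hε => ?_
  obtain ⟨m, hm⟩ := h.exists_lt_pow_mul hε (dist x a₀)
  filter_upwards [eventually_ge_atTop m] with k hk
  refine mem_thickening_iff.mpr ⟨_, (hsK k).1, ?_⟩
  have hmk : κ ^ m * ε ≤ κ ^ k * ε :=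
    mul_le_mul_of_nonneg_right (pow_le_pow_right₀ h.one_lt.le hk) hε.le
  exact lt_of_mul_lt_mul_left (((hpow k).trans_lt hm).trans_le hmk) (pow_pos h.kappa_pos k).le

end LocallyExpanding

theorem TopExpanding.exists_bridge {S : Type*} [TopologicalSpace S] {f : S → S} {K N : Set S}
    (h : TopExpanding f K) (hK : IsCompact K) (hne : K.Nonempty) (hfK : f '' K = K)
    (hN : IsOpen N) (hKN : K ⊆ N) {b : ℕ → S} (hb : ∀ n, f (b (n + 1)) = b n)
    (hbN : ∀ n, b n ∈ N) (hbK : K ⊆ closure (range b)) :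
    ∃ y, y 0 = b 0 ∧ BackwardOrbitTo f K y ∧ ∀ k, y k ∈ N := by
  obtain ⟨M, rfl, κ, r, h⟩ := h
  obtain ⟨ρ₀, hρ₀, hρ₀N⟩ := hK.exists_thickening_subset_open hN hKN
  have hρ : 0 < min r ρ₀ := lt_min h.r_pos hρ₀
  obtain ⟨x, hx⟩ := hne
  obtain ⟨_, hbn, n, rfl⟩ := mem_closure_iff.mp (hbK hx) _ isOpen_thickening
    (self_subset_thickening hρ K hx)
  obtain ⟨u, hu0, hu, huN⟩ := h.exists_backwardOrbit_of_dist_lt hK hfK (min_le_left _ _) hbn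
  exact hu.splice hb hbN (fun k => hρ₀N (thickening_mono (min_le_right _ _) K (huN k))) hu0

section UnionOrbit

variable {S : Type*} [TopologicalSpace S] {K : Set S}

lemma isCompact_union_image_of_tendsto {ι : Type*} {u : ι → S} (hK : IsCompact K)
    (hu : Tendsto u cofinite (𝓝ˢ K)) (A : Set ι) : IsCompact (K ∪ u '' A) := by
  refine isCompact_of_finite_subcover fun U hU hcov => ?_
  obtain ⟨t, ht⟩ := hK.elim_finite_subcover U hU (subset_union_left.trans hcov)
  have hV : IsOpen (⋃ i ∈ t, U i) := isOpen_biUnion fun i _ => hU i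
  have hfin : {i | u i ∉ ⋃ i ∈ t, U i}.Finite := hu (hV.mem_nhdsSet.mpr ht)
  obtain ⟨t', ht'⟩ := ((hfin.inter_of_right A).image u).isCompact.elim_finite_subcover U hU
    ((image_mono inter_subset_left).trans (subset_union_right.trans hcov))
  classical
  refine ⟨t ∪ t', ?_⟩
  rw [Finset.set_biUnion_union]
  rintro _ (hx | ⟨i, hi, rfl⟩)
  · exact Or.inl (ht hx)
  · by_cases hiV : u i ∈ ⋃ i ∈ t, U i
    · exact Or.inl hiV
    · exact Or.inr (ht' ⟨i, ⟨hi, hiV⟩, rfl⟩)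

lemma isTotallyDisconnected_union_range_of_tendsto {ι : Type*} {u : ι → S} [T2Space S]
    (hK : IsCompact K) (htd : IsTotallyDisconnected K) (hu : Tendsto u cofinite (𝓝ˢ K)) :
    IsTotallyDisconnected (K ∪ range u) := by
  intro C hCX hC
  by_cases hCK : C ⊆ K
  · exact htd C hCK hC
  obtain ⟨x, hxC, hxK⟩ := not_subset.mp hCK
  let rest : Set S := K ∪ u '' (u ⁻¹' {x}ᶜ)
  have hrest : IsClosed rest := (isCompact_union_image_of_tendsto hK hu _).isClosed
  have hcov : C ⊆ {x} ∪ rest := fun z hz => by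
    rcases eq_or_ne z x with hzx | hzx
    · exact Or.inl hzx
    · exact Or.inr ((hCX hz).imp_right fun ⟨i, hi⟩ => ⟨i, hi.trans_ne hzx, hi⟩)
  have hx : x ∉ rest := by
    rintro (h | ⟨i, hi, h⟩)
    exacts [hxK h, hi h]
  rcases isPreconnected_iff_subset_of_disjoint_closed.mp hC {x} rest isClosed_singleton hrest hcov
    (by rw [singleton_inter_eq_empty.mpr hx, inter_empty]) with hsub | hsub
  · exact subsingleton_singleton.anti hsub
  · exact absurd (hsub hxC) hx

end UnionOrbit

section ChainTransitivity

variable {S : Type*} [TopologicalSpace S] {f : S → S} {X Y : Set S} {D : Set (S × S)}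

lemma ChainTransitiveOn.reflTransGen_of_subset (h : ChainTransitiveOn f X)
    (hD : D ∈ 𝓝ˢ (diagonal S)) (hXY : X ⊆ Y) {a b : S} (ha : a ∈ X) (hb : b ∈ X) :
    Relation.ReflTransGen (ChainStep f Y D) a b :=
  Relation.ReflTransGen.mono (fun _ _ huv => ⟨hXY huv.1, hXY huv.2.1, huv.2.2⟩) _ _
    (h D hD a ha b hb)

lemma reflTransGen_chainStep_iterate (hX : MapsTo f X X) (hD : D ∈ 𝓝ˢ (diagonal S)) {u : S}
    (hu : u ∈ X) (n : ℕ) : Relation.ReflTransGen (ChainStep f X D) u (f^[n] u) := by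
  induction n with
  | zero => exact .refl
  | succ n ih =>
    exact ih.tail ⟨hX.iterate n hu, hX.iterate (n + 1) hu,
      subset_of_mem_nhdsSet hD (Function.iterate_succ_apply' f n u).symm⟩

lemma TransitiveOn.chainTransitiveOn [T2Space S] (h : TransitiveOn f X) (hf : Continuous f)
    (hX : MapsTo f X X) : ChainTransitiveOn f X := by
  intro D hD a ha b hb
  rcases eq_or_ne a b with rfl | hab
  · exact .refl
  rcases eq_or_ne (f a) b with hfab | hfab
  · exact .single ⟨ha, hb, subset_of_mem_nhdsSet hD hfab⟩
  obtain ⟨U₀, V₀, hU₀, hV₀, hUV₀⟩ := t2_separation_nhds hab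
  obtain ⟨U₁, V₁, hU₁, hV₁, hUV₁⟩ := t2_separation_nhds hfab
  have hDa : {v | (f a, v) ∈ D} ∈ 𝓝 (f a) :=
    (Continuous.prodMk_right (f a)).continuousAt (mem_nhdsSet_iff_forall.mp hD (f a, f a) rfl)
  have hDb : {v | (v, b) ∈ D} ∈ 𝓝 b :=
    (Continuous.prodMk_left b).continuousAt (mem_nhdsSet_iff_forall.mp hD (b, b) rfl)
  obtain ⟨m, _, ⟨u, ⟨huU, hu⟩, rfl⟩, huV⟩ := h _ _ isOpen_interior isOpen_interior
    ⟨a, mem_interior_iff_mem_nhds.mpr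
      (inter_mem hU₀ (hf.continuousAt (inter_mem hU₁ hDa))), ha⟩
    ⟨b, mem_interior_iff_mem_nhds.mpr (inter_mem (inter_mem hV₀ hV₁) hDb), hb⟩
  obtain ⟨huU₀, huU₁, huD⟩ := interior_subset huU
  obtain ⟨⟨huV₀, huV₁⟩, huD'⟩ := interior_subset huV
  match m with
  | 0 => exact (disjoint_left.mp hUV₀ huU₀ huV₀).elim
  | 1 => exact (disjoint_left.mp hUV₁ huU₁ huV₁).elim
  | m + 2 =>
    refine .head ⟨ha, hX hu, huD⟩ ((reflTransGen_chainStep_iterate hX hD (hX hu) m).tail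
      ⟨hX.iterate (m + 1) hu, hb, ?_⟩)
    rwa [← Function.iterate_succ_apply f, ← Function.iterate_succ_apply' f]

end ChainTransitivity

namespace BackwardOrbitTo

variable {S : Type*} [TopologicalSpace S] {f : S → S} {K L X : Set S} {D : Set (S × S)}
  {y w : ℕ → S}

lemma tendsto_cofinite (hy : BackwardOrbitTo f K y) : Tendsto y cofinite (𝓝ˢ K) :=
  Nat.cofinite_eq_atTop ▸ hy.tendsto

lemma image_range (hy : BackwardOrbitTo f K y) : f '' range y = insert (f (y 0)) (range y) := by
  rw [← range_comp]
  ext z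
  constructor
  · rintro ⟨_ | k, rfl⟩
    exacts [Or.inl rfl, Or.inr ⟨k, (hy.apply_succ k).symm⟩]
  · rintro (rfl | ⟨k, rfl⟩)
    exacts [⟨0, rfl⟩, ⟨k + 1, hy.apply_succ k⟩]

lemma isCompact_union_range (hy : BackwardOrbitTo f K y) (hK : IsCompact K) :
    IsCompact (K ∪ range y) :=
  image_univ (f := y) ▸ isCompact_union_image_of_tendsto hK hy.tendsto_cofinite univ

lemma isTotallyDisconnected_union_range [T2Space S] (hy : BackwardOrbitTo f K y)
    (hK : IsCompact K) (htd : IsTotallyDisconnected K) : IsTotallyDisconnected (K ∪ range y) :=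
  isTotallyDisconnected_union_range_of_tendsto hK htd hy.tendsto_cofinite

lemma image_union_bridges (hy : BackwardOrbitTo f K y) (hw : BackwardOrbitTo f L w)
    (hK : f '' K = K) (hL : f '' L = L) (hy0 : y 0 ∈ L) (hw0 : w 0 ∈ K) :
    f '' ((K ∪ range y) ∪ (L ∪ range w)) = (K ∪ range y) ∪ (L ∪ range w) := by
  have hfy0 : f (y 0) ∈ L := hL ▸ mem_image_of_mem f hy0
  have hfw0 : f (w 0) ∈ K := hK ▸ mem_image_of_mem f hw0
  simp only [image_union, hK, hL, hy.image_range, hw.image_range]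
  ext z
  simp only [mem_union, mem_insert_iff]
  constructor
  · rintro ((h | rfl | h) | (h | rfl | h)) <;> tauto
  · tauto

lemma reflTransGen_add (hy : BackwardOrbitTo f K y) (hD : D ∈ 𝓝ˢ (diagonal S))
    (hyX : ∀ k, y k ∈ X) (k j : ℕ) :
    Relation.ReflTransGen (ChainStep f X D) (y (k + j)) (y k) := by
  induction j with
  | zero => exact .refl
  | succ j ih =>
    exact .head ⟨hyX _, hyX _, subset_of_mem_nhdsSet hD (hy.apply_succ (k + j))⟩ ih

lemma reflTransGen_of_mem (hy : BackwardOrbitTo f K y) (hK : f '' K = K)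
    (ht : ChainTransitiveOn f K) (hD : D ∈ 𝓝ˢ (diagonal S)) (hKX : K ⊆ X) (hyX : ∀ k, y k ∈ X)
    {a : S} (ha : a ∈ K) (k : ℕ) :
    Relation.ReflTransGen (ChainStep f X D) a (y k) := by
  have hnhds : {z | ∃ c ∈ K, (c, z) ∈ D} ∈ 𝓝ˢ K := mem_nhdsSet_iff_forall.mpr fun c hc =>
    mem_of_superset ((Continuous.prodMk_right c).continuousAt
      (mem_nhdsSet_iff_forall.mp hD (c, c) rfl)) fun z hz => ⟨c, hc, hz⟩
  obtain ⟨j, ⟨c, hc, hcD⟩, hj⟩ :=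
    ((hy.tendsto.eventually hnhds).and (eventually_ge_atTop k)).exists
  obtain ⟨j, rfl⟩ := Nat.exists_eq_add_of_le hj
  obtain ⟨v, hv, rfl⟩ : c ∈ f '' K := hK.symm ▸ hc
  exact ((ht.reflTransGen_of_subset hD hKX ha hv).tail ⟨hKX hv, hyX _, hcD⟩).trans
    (hy.reflTransGen_add hD hyX k j)

lemma chainTransitiveOn_union_bridges (hy : BackwardOrbitTo f K y) (hw : BackwardOrbitTo f L w)
    (hK : f '' K = K) (hL : f '' L = L) (hKt : ChainTransitiveOn f K)
    (hLt : ChainTransitiveOn f L) (hy0 : y 0 ∈ L) (hw0 : w 0 ∈ K) :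
    ChainTransitiveOn f ((K ∪ range y) ∪ (L ∪ range w)) := by
  intro D hD
  set X := (K ∪ range y) ∪ (L ∪ range w)
  have hKX : K ⊆ X := fun _ h => Or.inl (Or.inl h)
  have hLX : L ⊆ X := fun _ h => Or.inr (Or.inl h)
  have hyX : ∀ k, y k ∈ X := fun k => Or.inl (Or.inr ⟨k, rfl⟩)
  have hwX : ∀ k, w k ∈ X := fun k => Or.inr (Or.inr ⟨k, rfl⟩)
  have hyb : ∀ k, Relation.ReflTransGen (ChainStep f X D) (y k) (y 0) := fun k => by
    simpa only [zero_add] using hy.reflTransGen_add hD hyX 0 k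
  have hwb : ∀ k, Relation.ReflTransGen (ChainStep f X D) (w k) (w 0) := fun k => by
    simpa only [zero_add] using hw.reflTransGen_add hD hwX 0 k
  have hKy {a} (ha : a ∈ K) k := hy.reflTransGen_of_mem hK hKt hD hKX hyX ha k
  have hLw {a} (ha : a ∈ L) k := hw.reflTransGen_of_mem hL hLt hD hLX hwX ha k
  have hto : ∀ a ∈ X, Relation.ReflTransGen (ChainStep f X D) a (w 0) := by
    rintro a ((ha | ⟨k, rfl⟩) | (ha | ⟨k, rfl⟩))
    exacts [hKt.reflTransGen_of_subset hD hKX ha hw0, (hyb k).trans (hLw hy0 0), hLw ha 0, hwb k]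
  have hfrom : ∀ b ∈ X, Relation.ReflTransGen (ChainStep f X D) (w 0) b := by
    rintro b ((hb | ⟨k, rfl⟩) | (hb | ⟨k, rfl⟩))
    · exact hKt.reflTransGen_of_subset hD hKX hw0 hb
    · exact hKy hw0 k
    · exact (hKy hw0 0).trans (hLt.reflTransGen_of_subset hD hLX hy0 hb)
    · exact (hKy hw0 0).trans (hLw hy0 k)
  exact fun a ha b hb => (hto a ha).trans (hfrom b hb)

end BackwardOrbitTo

/-! ### Metric derivatives -/

/-- Near `x`, the map `g` multiplies distances by `s`, up to an error of smaller order. As for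
strict derivatives, both points vary, so that `s > 0` makes `g` bi-Lipschitz near `x`. -/
def HasMetricDeriv {X Y : Type*} [MetricSpace X] [MetricSpace Y] (g : X → Y) (x : X) (s : ℝ) :
    Prop :=
  (fun p : X × X => dist (g p.1) (g p.2) - s * dist p.1 p.2) =o[𝓝 (x, x)]
    fun p => dist p.1 p.2

namespace HasMetricDeriv

variable {X Y Z : Type*} [MetricSpace X] [MetricSpace Y] [MetricSpace Z]
  {g : X → Y} {k : Y → Z} {x : X} {s t : ℝ}

lemma iff_eventually : HasMetricDeriv g x s ↔ ∀ ε > 0, ∀ᶠ p : X × X in 𝓝 (x, x),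
    |dist (g p.1) (g p.2) - s * dist p.1 p.2| ≤ ε * dist p.1 p.2 := by
  simp only [HasMetricDeriv, Asymptotics.isLittleO_iff, Real.norm_eq_abs,
    abs_of_nonneg dist_nonneg, gt_iff_lt]

lemma eventually_mul_dist_le (h : HasMetricDeriv g x s) {a : ℝ} (ha : a < s) :
    ∀ᶠ p : X × X in 𝓝 (x, x), a * dist p.1 p.2 ≤ dist (g p.1) (g p.2) := by
  filter_upwards [iff_eventually.mp h (s - a) (sub_pos.mpr ha)] with p hp
  linarith [(abs_le.mp hp).1]

lemma eventually_dist_le_mul (h : HasMetricDeriv g x s) {a : ℝ} (ha : s < a) :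
    ∀ᶠ p : X × X in 𝓝 (x, x), dist (g p.1) (g p.2) ≤ a * dist p.1 p.2 := by
  filter_upwards [iff_eventually.mp h (a - s) (sub_pos.mpr ha)] with p hp
  linarith [(abs_le.mp hp).2]

lemma isBigO (h : HasMetricDeriv g x s) :
    (fun p : X × X => dist (g p.1) (g p.2)) =O[𝓝 (x, x)] fun p => dist p.1 p.2 := by
  refine Asymptotics.IsBigO.of_bound (s + 1) ?_
  filter_upwards [h.eventually_dist_le_mul (lt_add_one s)] with p hp
  rwa [Real.norm_of_nonneg dist_nonneg, Real.norm_of_nonneg dist_nonneg]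

lemma continuousAt (h : HasMetricDeriv g x s) : ContinuousAt g x := by
  have hle : ∀ᶠ y in 𝓝 x, dist (g y) (g x) ≤ (s + 1) * dist y x :=
    ((Continuous.prodMk_left x).tendsto x).eventually (h.eventually_dist_le_mul (lt_add_one s))
  have hlim : Tendsto (fun y : X => (s + 1) * dist y x) (𝓝 x) (𝓝 0) := by
    have : Continuous fun y : X => (s + 1) * dist y x := by fun_prop
    simpa only [dist_self, mul_zero] using this.tendsto x
  exact tendsto_iff_dist_tendsto_zero.mpr
    (squeeze_zero' (Eventually.of_forall fun _ => dist_nonneg) hle hlim)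

lemma comp (hk : HasMetricDeriv k (g x) t) (hg : HasMetricDeriv g x s) :
    HasMetricDeriv (k ∘ g) x (t * s) := by
  have hc : Tendsto (fun p : X × X => (g p.1, g p.2)) (𝓝 (x, x)) (𝓝 (g x, g x)) :=
    ContinuousAt.prodMap' hg.continuousAt hg.continuousAt
  refine (((hk.comp_tendsto hc).trans_isBigO hg.isBigO).add
    (Asymptotics.IsLittleO.const_mul_left hg t)).congr_left fun p => ?_
  simp only [Function.comp]
  ring

lemma congr {g' : X → Y} (h : HasMetricDeriv g x s) (he : g =ᶠ[𝓝 x] g') :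
    HasMetricDeriv g' x s := by
  refine Asymptotics.IsLittleO.congr' h ?_ EventuallyEq.rfl
  rw [nhds_prod_eq]
  filter_upwards [he.prod_inl _, he.prod_inr _] with p hp₁ hp₂
  rw [hp₁, hp₂]

lemma of_leftInverse (h : HasMetricDeriv g x s) (hs : 0 < s) {d : Y → X}
    (hd : Function.LeftInverse d g) (hmap : map g (𝓝 x) = 𝓝 (g x)) :
    HasMetricDeriv d (g x) s⁻¹ := by
  rw [iff_eventually]
  intro ε hε
  rw [nhds_prod_eq, ← hmap, prod_map_map_eq, ← nhds_prod_eq, eventually_map]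
  filter_upwards [iff_eventually.mp h (ε * s ^ 2 / 2) (by positivity),
    h.eventually_mul_dist_le (half_lt_self hs)] with p hp hlow
  rw [hd p.1, hd p.2]
  set D := dist p.1 p.2
  set E := dist (g p.1) (g p.2)
  have hDE : D - s⁻¹ * E = -(s⁻¹ * (E - s * D)) := by field_simp; ring
  rw [hDE, abs_neg, abs_mul, abs_of_pos (inv_pos.mpr hs)]
  calc s⁻¹ * |E - s * D| ≤ s⁻¹ * (ε * s ^ 2 / 2 * D) := by gcongr
    _ = ε * (s / 2 * D) := by field_simp
    _ ≤ ε * E := by gcongr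

lemma iterate {g : X → X} {σ : X → ℝ} (h : ∀ x, HasMetricDeriv g x (σ x)) (n : ℕ) (x : X) :
    HasMetricDeriv g^[n] x (∏ i ∈ Finset.range n, σ (g^[i] x)) := by
  induction n with
  | zero =>
    simpa only [Finset.range_zero, Finset.prod_empty, one_mul, HasMetricDeriv,
      Function.iterate_zero_apply, sub_self] using Asymptotics.isLittleO_zero _ _
  | succ n ih =>
    rw [Finset.prod_range_succ, mul_comm, Function.iterate_succ']
    exact (h (g^[n] x)).comp ih

lemma tendsto_div (h : HasMetricDeriv g x s) :
    Tendsto (fun y => dist (g y) (g x) / dist y x) (𝓝[≠] x) (𝓝 s) := by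
  have hdiag : Tendsto (fun y : X => (y, x)) (𝓝[≠] x) (𝓝 (x, x)) :=
    ((Continuous.prodMk_left x).tendsto x).mono_left nhdsWithin_le_nhds
  have herr := (h.comp_tendsto hdiag).tendsto_div_nhds_zero.add_const s
  rw [zero_add] at herr
  refine herr.congr' ?_
  filter_upwards [self_mem_nhdsWithin] with y hy
  have : dist y x ≠ 0 := dist_ne_zero.mpr hy
  simp only [Function.comp]
  field_simp
  ring

lemma of_hasStrictDerivAt {F : ℂ → ℂ} {F' z : ℂ} (h : HasStrictDerivAt F F' z) :
    HasMetricDeriv F z ‖F'‖ := by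
  refine (Asymptotics.IsBigO.trans_isLittleO ?_ h.isLittleO.norm_right).congr_right
    fun p => (dist_eq_norm _ _).symm
  refine Asymptotics.IsBigO.of_bound 1 (Eventually.of_forall fun p => ?_)
  rw [one_mul, Real.norm_eq_abs, dist_eq_norm, dist_eq_norm, ← norm_mul, mul_comm]
  exact abs_norm_sub_norm_le _ _

end HasMetricDeriv

/-! ### Charts of the Riemann sphere -/

/-- The conformal factor relating the chordal distance to the Euclidean one. -/
noncomputable def chordalFactor (u v : ℂ) : ℝ :=
  2 / (√(1 + ‖u‖ ^ 2) * √(1 + ‖v‖ ^ 2))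

lemma chordalFactor_pos (u v : ℂ) : 0 < chordalFactor u v := by
  unfold chordalFactor
  positivity

lemma continuous_chordalFactor : Continuous fun p : ℂ × ℂ => chordalFactor p.1 p.2 := by
  unfold chordalFactor
  exact continuous_const.div (by fun_prop) fun p => by positivity

lemma chordalFactor_sq (u v : ℂ) :
    chordalFactor u v ^ 2 = 4 / ((1 + ‖u‖ ^ 2) * (1 + ‖v‖ ^ 2)) := by
  rw [chordalFactor, div_pow, mul_pow, Real.sq_sqrt (by positivity), Real.sq_sqrt (by positivity)]
  norm_num

namespace RSphere

lemma cases_ofC (x : RSphere) : x = infty ∨ ∃ z, x = ofC z := by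
  obtain ⟨_ | z⟩ := x
  exacts [Or.inl rfl, Or.inr ⟨z, rfl⟩]

lemma ofC_ne_infty (z : ℂ) : ofC z ≠ infty := fun h => Option.some_ne_none z (congrArg val h)

lemma toC_ofC (z : ℂ) : toC (ofC z) = z := rfl

lemma embed_ofC_fst (z : ℂ) : (embed (ofC z)).fst = ((2 / (‖z‖ ^ 2 + 1)) : ℝ) • z := rfl

lemma embed_ofC_snd (z : ℂ) : (embed (ofC z)).snd = (‖z‖ ^ 2 - 1) / (‖z‖ ^ 2 + 1) := rfl

lemma embed_infty_fst : (embed infty).fst = 0 := rfl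

lemma embed_infty_snd : (embed infty).snd = 1 := rfl

lemma isometry_embed : Isometry embed := Isometry.of_dist_eq fun _ _ => rfl

lemma dist_eq_sqrt (x y : RSphere) : dist x y =
    √(dist (embed x).fst (embed y).fst ^ 2 + dist (embed x).snd (embed y).snd ^ 2) := by
  rw [← isometry_embed.dist_eq, WithLp.prod_dist_eq_of_L2]

lemma dist_ofC (u v : ℂ) : dist (ofC u) (ofC v) = chordalFactor u v * dist u v := by
  rw [dist_eq_sqrt, Real.sqrt_eq_iff_eq_sq (by positivity)
    (mul_nonneg (chordalFactor_pos u v).le dist_nonneg), mul_pow, chordalFactor_sq,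
    embed_ofC_fst, embed_ofC_fst, embed_ofC_snd, embed_ofC_snd,
    dist_eq_norm, dist_eq_norm, dist_eq_norm, Real.norm_eq_abs, sq_abs]
  have hu : ‖u‖ ^ 2 + 1 ≠ 0 := by positivity
  have hv : ‖v‖ ^ 2 + 1 ≠ 0 := by positivity
  simp only [Complex.sq_norm, Complex.normSq_apply, Complex.sub_re, Complex.sub_im,
    Complex.real_smul, Complex.mul_re, Complex.mul_im, Complex.ofReal_re,
    Complex.ofReal_im] at hu hv ⊢
  rw [add_comm 1, add_comm 1]
  field_simp
  ring

lemma inv_infty : inv infty = ofC 0 := rfl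

lemma inv_ofC_zero : inv (ofC 0) = infty := if_pos rfl

lemma inv_ofC {z : ℂ} (hz : z ≠ 0) : inv (ofC z) = ofC z⁻¹ := if_neg hz

lemma involutive_inv : Function.Involutive inv := by
  intro x
  obtain rfl | ⟨z, rfl⟩ := x.cases_ofC
  · rw [inv_infty, inv_ofC_zero]
  obtain rfl | hz := eq_or_ne z 0
  · rw [inv_ofC_zero, inv_infty]
  · rw [inv_ofC hz, inv_ofC (inv_ne_zero hz), inv_inv]

lemma embed_inv_fst (x : RSphere) : (embed (inv x)).fst = (starRingEnd ℂ) (embed x).fst := by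
  obtain rfl | ⟨z, rfl⟩ := x.cases_ofC
  · rw [inv_infty, embed_infty_fst, embed_ofC_fst, smul_zero, map_zero]
  obtain rfl | hz := eq_or_ne z 0
  · rw [inv_ofC_zero, embed_infty_fst, embed_ofC_fst, smul_zero, map_zero]
  have hz' : ‖z‖ ≠ 0 := norm_ne_zero_iff.mpr hz
  have hinv : z⁻¹ = ((‖z‖ ^ 2)⁻¹ : ℝ) • (starRingEnd ℂ) z := by
    rw [Complex.inv_def, Complex.sq_norm, Complex.real_smul, mul_comm]
  rw [inv_ofC hz, embed_ofC_fst, embed_ofC_fst, norm_inv, hinv, smul_smul, Complex.real_smul,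
    Complex.real_smul, map_mul, Complex.conj_ofReal]
  congr 2
  field_simp
  ring

lemma embed_inv_snd (x : RSphere) : (embed (inv x)).snd = -(embed x).snd := by
  obtain rfl | ⟨z, rfl⟩ := x.cases_ofC
  · rw [inv_infty, embed_infty_snd, embed_ofC_snd]
    norm_num
  obtain rfl | hz := eq_or_ne z 0
  · rw [inv_ofC_zero, embed_infty_snd, embed_ofC_snd]
    norm_num
  have hz' : ‖z‖ ≠ 0 := norm_ne_zero_iff.mpr hz
  rw [inv_ofC hz, embed_ofC_snd, embed_ofC_snd, norm_inv]
  field_simp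
  ring

lemma isometry_inv : Isometry inv := by
  refine Isometry.of_dist_eq fun x y => ?_
  rw [dist_eq_sqrt, dist_eq_sqrt, embed_inv_fst, embed_inv_snd, embed_inv_fst, embed_inv_snd,
    dist_neg_neg, Complex.dist_conj_conj]

lemma map_inv_nhds (x : RSphere) : map inv (𝓝 x) = 𝓝 (inv x) :=
  (Homeomorph.mk involutive_inv.toPerm isometry_inv.continuous
    isometry_inv.continuous).map_nhds_eq x

lemma continuous_ofC : Continuous ofC := by
  refine continuous_iff_continuousAt.mpr fun z => tendsto_iff_dist_tendsto_zero.mpr ?_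
  have : Continuous fun u : ℂ => chordalFactor u z * dist u z :=
    (continuous_chordalFactor.comp (Continuous.prodMk_left z)).mul (by fun_prop)
  simpa only [dist_ofC, dist_self, mul_zero] using this.tendsto z

lemma one_sub_embed_ofC_snd (z : ℂ) : 1 - (embed (ofC z)).snd = 2 / (‖z‖ ^ 2 + 1) := by
  have : ‖z‖ ^ 2 + 1 ≠ 0 := by positivity
  rw [embed_ofC_snd]
  field_simp
  ring

lemma one_sub_embed_ofC_snd_pos (z : ℂ) : 0 < 1 - (embed (ofC z)).snd := by
  rw [one_sub_embed_ofC_snd]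
  positivity

lemma inv_one_sub_embed_snd_smul {x : RSphere} (hx : x ≠ infty) :
    (1 - (embed x).snd)⁻¹ • (embed x).fst = toC x := by
  obtain rfl | ⟨z, rfl⟩ := x.cases_ofC
  · exact absurd rfl hx
  · rw [toC_ofC, embed_ofC_fst, ← one_sub_embed_ofC_snd, inv_smul_smul₀]
    exact (one_sub_embed_ofC_snd_pos z).ne'

lemma continuousAt_toC (z : ℂ) : ContinuousAt toC (ofC z) := by
  have hfst : Continuous fun x : RSphere => (embed x).fst :=
    (WithLp.continuous_fst 2 ℂ ℝ).comp isometry_embed.continuous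
  have hsnd : Continuous fun x : RSphere => (embed x).snd :=
    (WithLp.continuous_snd 2 ℂ ℝ).comp isometry_embed.continuous
  refine ContinuousAt.congr (((continuous_const.sub hsnd).continuousAt.inv₀
    (one_sub_embed_ofC_snd_pos z).ne').smul hfst.continuousAt) ?_
  filter_upwards [isOpen_ne.mem_nhds (ofC_ne_infty z)] with x hx
  exact inv_one_sub_embed_snd_smul hx

lemma map_ofC_nhds (z : ℂ) : map ofC (𝓝 z) = 𝓝 (ofC z) := by
  refine le_antisymm (continuous_ofC.tendsto z) ?_
  have hid : ofC ∘ toC =ᶠ[𝓝 (ofC z)] id := by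
    filter_upwards [isOpen_ne.mem_nhds (ofC_ne_infty z)] with x hx
    obtain rfl | ⟨w, rfl⟩ := x.cases_ofC
    exacts [absurd rfl hx, rfl]
  calc 𝓝 (ofC z) = map (ofC ∘ toC) (𝓝 (ofC z)) := by rw [map_congr hid, map_id]
    _ = map ofC (map toC (𝓝 (ofC z))) := map_map.symm
    _ ≤ map ofC (𝓝 z) := map_mono (continuousAt_toC z)

/-- One of the two standard charts of the Riemann sphere, centred at `0` and at `∞`: the
parametrization is `e`, its inverse is `d`, and `h` is the transition map to `ofC`, so `h` is `id`
or `z ↦ z⁻¹`. The properties common to the two are collected here to treat them uniformly. -/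
structure IsChart (e : ℂ → RSphere) (d : RSphere → ℂ) (h : ℂ → ℂ) : Prop where
  dist_eq : ∀ u v, dist (e u) (e v) = chordalFactor u v * dist u v
  map_nhds : ∀ z, map e (𝓝 z) = 𝓝 (e z)
  leftInverse : Function.LeftInverse d e
  apply_eq_ofC : ∀ u, u ≠ 0 → e u = ofC (h u)
  apply_ofC : ∀ v, v ≠ 0 → d (ofC v) = h v
  injective : Function.Injective h
  differentiableAt : ∀ u, u ≠ 0 → DifferentiableAt ℂ h u

lemma isChart_ofC : IsChart ofC toC id where
  dist_eq := dist_ofC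
  map_nhds := map_ofC_nhds
  leftInverse := toC_ofC
  apply_eq_ofC _ _ := rfl
  apply_ofC _ _ := rfl
  injective := Function.injective_id
  differentiableAt _ _ := differentiableAt_id

lemma isChart_inv_ofC : IsChart (inv ∘ ofC) (toC ∘ inv) (·⁻¹) where
  dist_eq u v := (isometry_inv.dist_eq _ _).trans (dist_ofC u v)
  map_nhds z := by rw [← map_map, map_ofC_nhds, map_inv_nhds, Function.comp_apply]
  leftInverse z := by
    rw [Function.comp_apply, Function.comp_apply, involutive_inv, toC_ofC]
  apply_eq_ofC _ hu := inv_ofC hu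
  apply_ofC v hv := by rw [Function.comp_apply, inv_ofC hv, toC_ofC]
  injective := inv_injective
  differentiableAt _ hu := differentiableAt_inv hu

lemma exists_isChart (x : RSphere) : ∃ e d h, IsChart e d h ∧ ∃ z, e z = x := by
  obtain rfl | ⟨z, rfl⟩ := x.cases_ofC
  · exact ⟨_, _, _, isChart_inv_ofC, 0, inv_ofC_zero⟩
  · exact ⟨_, _, _, isChart_ofC, z, rfl⟩

namespace IsChart

variable {e : ℂ → RSphere} {d : RSphere → ℂ} {h : ℂ → ℂ}

lemma continuous (H : IsChart e d h) : Continuous e :=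
  continuous_iff_continuousAt.mpr fun z => (H.map_nhds z).le

lemma hasMetricDeriv (H : IsChart e d h) (z : ℂ) : HasMetricDeriv e z (chordalFactor z z) := by
  rw [HasMetricDeriv.iff_eventually]
  intro ε hε
  filter_upwards [Metric.tendsto_nhds.mp (continuous_chordalFactor.tendsto (z, z)) ε hε]
    with p hp
  rw [H.dist_eq, ← sub_mul, abs_mul, abs_of_nonneg dist_nonneg, ← Real.dist_eq]
  gcongr

lemma continuousAt_leftInverse (H : IsChart e d h) (z : ℂ) : ContinuousAt d (e z) := by
  rw [ContinuousAt, ← H.map_nhds, tendsto_map'_iff, H.leftInverse z, H.leftInverse.comp_eq_id]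
  exact tendsto_id

lemma eventually_apply_leftInverse (H : IsChart e d h) (z : ℂ) :
    ∀ᶠ y in 𝓝 (e z), e (d y) = y := by
  rw [← H.map_nhds, eventually_map]
  exact Eventually.of_forall fun u => by rw [H.leftInverse]

end IsChart

instance : CompactSpace RSphere := by
  have hdisk : IsCompact (ofC '' closedBall 0 1) := (isCompact_closedBall 0 1).image continuous_ofC
  refine isCompact_univ_iff.mp ((hdisk.union
    (hdisk.image isometry_inv.continuous)).of_isClosed_subset isClosed_univ fun x _ => ?_)
  obtain rfl | ⟨z, rfl⟩ := x.cases_ofC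
  · exact Or.inr ⟨ofC 0, ⟨0, mem_closedBall_self zero_le_one, rfl⟩, inv_ofC_zero⟩
  rcases le_or_gt ‖z‖ 1 with hz | hz
  · exact Or.inl ⟨z, mem_closedBall_zero_iff.mpr hz, rfl⟩
  have hz0 : z ≠ 0 := norm_pos_iff.mp (zero_lt_one.trans hz)
  refine Or.inr ⟨ofC z⁻¹, ⟨z⁻¹, mem_closedBall_zero_iff.mpr ?_, rfl⟩, ?_⟩
  · rw [norm_inv]
    exact inv_le_one_of_one_le₀ hz.le
  · rw [inv_ofC (inv_ne_zero hz0), inv_inv]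

instance : LocallyConnectedSpace RSphere := by
  choose e d h H z hz using exists_isChart
  refine locallyConnectedSpace_of_connected_bases (fun x (r : ℝ) => e x '' ball (z x) r)
    (fun _ r => 0 < r) (fun x => ?_) fun x r _ => ?_
  · have hbasis := (nhds_basis_ball (x := z x)).map (e x)
    rwa [(H x).map_nhds, hz] at hbasis
  · exact (convex_ball (z x) r).isPreconnected.image _ (H x).continuous.continuousOn

instance (x : RSphere) : (𝓝[≠] x).NeBot := by
  obtain ⟨e, d, h, H, z, rfl⟩ := exists_isChart x
  have he : Tendsto e (𝓝[≠] z) (𝓝[≠] (e z)) :=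
    H.continuous.continuousAt.continuousWithinAt.tendsto_nhdsWithin
      fun _ hu => H.leftInverse.injective.ne hu
  exact he.neBot

end RSphere

/-! ### Rational maps as metrically conformal maps -/

section SphDeriv

variable {g : RSphere → RSphere} {x : RSphere} {s : ℝ}

lemma HasMetricDeriv.sphDeriv_eq (h : HasMetricDeriv g x s) : sphDeriv g x = s :=
  h.tendsto_div.limsup_eq

lemma HasMetricDeriv.nonneg (h : HasMetricDeriv g x s) : 0 ≤ s :=
  ge_of_tendsto' h.tendsto_div fun _ => div_nonneg dist_nonneg dist_nonneg

lemma lowerSemicontinuous_sphDeriv (h : ∀ x, HasMetricDeriv g x (sphDeriv g x)) :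
    LowerSemicontinuous (sphDeriv g) := by
  intro x a ha
  obtain ⟨b, hab, hb⟩ := exists_between ha
  have hdiag : Tendsto (fun y : RSphere => (y, y)) (𝓝 x) (𝓝 (x, x)) :=
    (continuous_id.prodMk continuous_id).tendsto x
  filter_upwards [hdiag.eventually ((h x).eventually_mul_dist_le hb).eventually_nhds] with y hy
  have hfst : Tendsto (fun u : RSphere => (u, y)) (𝓝[≠] y) (𝓝 (y, y)) :=
    ((Continuous.prodMk_left y).tendsto y).mono_left nhdsWithin_le_nhds
  refine hab.trans_le (ge_of_tendsto (h y).tendsto_div ?_)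
  filter_upwards [hfst.eventually hy, self_mem_nhdsWithin] with u hu hne
  rwa [le_div_iff₀ (dist_pos.mpr hne)]

end SphDeriv

/-- A self-map of the sphere which infinitesimally multiplies distances by its spherical derivative
and is open at its noncritical points. This is all that the dynamical arguments need to know about
rational maps. -/
structure IsMetricallyConformal (f : RSphere → RSphere) : Prop where
  hasMetricDeriv : ∀ x, HasMetricDeriv f x (sphDeriv f x)
  nhds_le_map : ∀ x, x ∉ critSet f → 𝓝 (f x) ≤ map f (𝓝 x)

namespace RSphere.IsChart

variable {e e' : ℂ → RSphere} {d d' : RSphere → ℂ} {h h' : ℂ → ℂ} {f : RSphere → RSphere}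
  {z w F' : ℂ}

lemma comp_comp_eventuallyEq (H : IsChart e d h) (H' : IsChart e' d' h')
    (hf : ContinuousAt f (e z)) (hw : e' w = f (e z)) :
    e' ∘ (d' ∘ f ∘ e) =ᶠ[𝓝 z] f ∘ e := by
  have hfe : Tendsto (f ∘ e) (𝓝 z) (𝓝 (e' w)) := by
    rw [hw]
    exact hf.tendsto.comp (H.continuous.tendsto z)
  exact hfe.eventually (H'.eventually_apply_leftInverse w)

lemma hasMetricDeriv_of_hasStrictDerivAt (H : IsChart e d h) (H' : IsChart e' d' h')
    (hf : ContinuousAt f (e z)) (hw : e' w = f (e z))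
    (hF : HasStrictDerivAt (d' ∘ f ∘ e) F' z) :
    HasMetricDeriv f (e z) (chordalFactor w w * ‖F'‖ * (chordalFactor z z)⁻¹) := by
  have hFz : (d' ∘ f ∘ e) z = w := by
    rw [Function.comp_apply, Function.comp_apply, ← hw, H'.leftInverse]
  have hd : HasMetricDeriv d (e z) (chordalFactor z z)⁻¹ :=
    (H.hasMetricDeriv z).of_leftInverse (chordalFactor_pos z z) H.leftInverse (H.map_nhds z)
  have heF : HasMetricDeriv (f ∘ e) (d (e z)) (chordalFactor w w * ‖F'‖) := by
    rw [H.leftInverse z]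
    refine HasMetricDeriv.congr (HasMetricDeriv.comp ?_ (.of_hasStrictDerivAt hF))
      (H.comp_comp_eventuallyEq H' hf hw)
    rw [hFz]
    exact H'.hasMetricDeriv w
  exact (heF.comp hd).congr <| (H.eventually_apply_leftInverse z).mono fun y hy => congrArg f hy

lemma nhds_le_map_of_hasStrictDerivAt (H : IsChart e d h) (H' : IsChart e' d' h')
    (hf : ContinuousAt f (e z)) (hw : e' w = f (e z))
    (hF : HasStrictDerivAt (d' ∘ f ∘ e) F' z) (hF' : F' ≠ 0) :
    𝓝 (f (e z)) ≤ map f (𝓝 (e z)) := by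
  have hmap : map (d' ∘ f ∘ e) (𝓝 z) = 𝓝 w := by
    rw [hF.map_nhds_eq hF', Function.comp_apply, Function.comp_apply, ← hw, H'.leftInverse]
  rw [← H.map_nhds, map_map, ← map_congr (H.comp_comp_eventuallyEq H' hf hw), ← map_map, hmap,
    H'.map_nhds, hw]

end RSphere.IsChart

namespace IsRationalMap

open RSphere

variable {f : RSphere → RSphere} {p q : Polynomial ℂ} {e e' : ℂ → RSphere} {d d' : RSphere → ℂ}
  {h h' : ℂ → ℂ}

lemma ne_zero_of_ratDeg_ne_zero (hf : IsRationalMap f p q) (hdeg : ratDeg p q ≠ 0) :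
    p ≠ 0 ∧ q ≠ 0 := by
  constructor
  · rintro rfl
    have hq := Polynomial.natDegree_eq_zero_of_isUnit (isCoprime_zero_left.mp hf.coprime)
    exact hdeg (by rw [ratDeg, hq, Polynomial.natDegree_zero, max_self])
  · rintro rfl
    have hp := Polynomial.natDegree_eq_zero_of_isUnit (isCoprime_zero_right.mp hf.coprime)
    exact hdeg (by rw [ratDeg, hp, Polynomial.natDegree_zero, max_self])

lemma eventually_chart_apply_eq (hf : IsRationalMap f p q) (hp : p ≠ 0) (hq : q ≠ 0)
    (H : IsChart e d h) (H' : IsChart e' d' h') (z : ℂ) :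
    ∀ᶠ u in 𝓝[≠] z, u ≠ 0 ∧ p.eval (h u) / q.eval (h u) ≠ 0 ∧ q.eval (h u) ≠ 0 ∧
      (d' ∘ f ∘ e) u = h' (p.eval (h u) / q.eval (h u)) := by
  have hroots : ∀ r : Polynomial ℂ, r ≠ 0 → ∀ᶠ u in 𝓝[≠] z, r.eval (h u) ≠ 0 := fun r hr =>
    nhdsNE_le_cofinite z
      ((Polynomial.finite_setOfPred_isRoot hr).preimage H.injective.injOn).compl_mem_cofinite
  filter_upwards [nhdsNE_le_cofinite z (finite_singleton 0).compl_mem_cofinite, hroots p hp,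
    hroots q hq] with u hu hpu hqu
  refine ⟨hu, div_ne_zero hpu hqu, hqu, ?_⟩
  rw [Function.comp_apply, Function.comp_apply, H.apply_eq_ofC u hu, hf.eval _ hqu,
    H'.apply_ofC _ (div_ne_zero hpu hqu)]

-- In charts, `f` is continuous and is given off finitely many points by a differentiable formula,
-- so the points at which the formula breaks down are removable singularities.
lemma analyticAt_chart (hf : IsRationalMap f p q) (hp : p ≠ 0) (hq : q ≠ 0)
    (H : IsChart e d h) (H' : IsChart e' d' h') {z w : ℂ} (hw : e' w = f (e z)) :
    AnalyticAt ℂ (d' ∘ f ∘ e) z := by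
  have hcont : ContinuousAt (d' ∘ f ∘ e) z := by
    refine ContinuousAt.comp ?_ (hf.continuous.comp H.continuous).continuousAt
    rw [Function.comp_apply, ← hw]
    exact H'.continuousAt_leftInverse w
  refine Complex.analyticAt_of_differentiable_on_punctured_nhds_of_continuousAt ?_ hcont
  filter_upwards [eventually_eventually_nhdsWithin.mpr
    (hf.eventually_chart_apply_eq hp hq H H' z), self_mem_nhdsWithin] with u hu huz
  rw [isOpen_compl_singleton.nhdsWithin_eq huz] at hu
  obtain ⟨hu0, hpq, hqu, -⟩ := hu.self_of_nhds
  have hh := H.differentiableAt u hu0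
  have hformula : DifferentiableAt ℂ (fun u => h' (p.eval (h u) / q.eval (h u))) u :=
    (H'.differentiableAt _ hpq).fun_comp' u
      ((p.differentiable.differentiableAt.fun_comp' u hh).div
        (q.differentiable.differentiableAt.fun_comp' u hh) hqu)
  exact hformula.congr_of_eventuallyEq (hu.mono fun v hv => hv.2.2.2)

theorem isMetricallyConformal (hf : IsRationalMap f p q) (hdeg : ratDeg p q ≠ 0) :
    IsMetricallyConformal f := by
  obtain ⟨hp, hq⟩ := hf.ne_zero_of_ratDeg_ne_zero hdeg
  have hchart : ∀ x, ∃ s, HasMetricDeriv f x s ∧ (s ≠ 0 → 𝓝 (f x) ≤ map f (𝓝 x)) := by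
    intro x
    obtain ⟨e, d, h, H, z, rfl⟩ := exists_isChart x
    obtain ⟨e', d', h', H', w, hw⟩ := exists_isChart (f (e z))
    have hF := (hf.analyticAt_chart hp hq H H' hw).hasStrictDerivAt
    refine ⟨_, H.hasMetricDeriv_of_hasStrictDerivAt H' hf.continuous.continuousAt hw hF,
      fun hs => H.nhds_le_map_of_hasStrictDerivAt H' hf.continuous.continuousAt hw hF ?_⟩
    exact norm_ne_zero_iff.mp (right_ne_zero_of_mul (left_ne_zero_of_mul hs))
  refine ⟨fun x => ?_, fun x hx => ?_⟩ <;> obtain ⟨s, hs, hmap⟩ := hchart x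
  · rwa [hs.sphDeriv_eq]
  · exact hmap fun h0 => hx (hs.sphDeriv_eq.trans h0)

end IsRationalMap

namespace IsMetricallyConformal

variable {f : RSphere → RSphere}

lemma continuous (hf : IsMetricallyConformal f) : Continuous f :=
  continuous_iff_continuousAt.mpr fun x => (hf.hasMetricDeriv x).continuousAt

lemma hasMetricDeriv_iterate (hf : IsMetricallyConformal f) (n : ℕ) (x : RSphere) :
    HasMetricDeriv f^[n] x (sphDeriv f^[n] x) := by
  have h := HasMetricDeriv.iterate hf.hasMetricDeriv n x
  rwa [h.sphDeriv_eq]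

lemma sphDeriv_nonneg (hf : IsMetricallyConformal f) (n : ℕ) (x : RSphere) :
    0 ≤ sphDeriv f^[n] x :=
  (hf.hasMetricDeriv_iterate n x).nonneg

lemma sphDeriv_pos (hf : IsMetricallyConformal f) {x : RSphere} (hx : x ∉ critSet f) :
    0 < sphDeriv f x :=
  (hf.sphDeriv_nonneg 1 x).lt_of_ne' hx

lemma sphDeriv_iterate_zero (hf : IsMetricallyConformal f) (x : RSphere) :
    sphDeriv f^[0] x = 1 := by
  rw [(HasMetricDeriv.iterate hf.hasMetricDeriv 0 x).sphDeriv_eq, Finset.range_zero,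
    Finset.prod_empty]

lemma sphDeriv_iterate_add (hf : IsMetricallyConformal f) (m n : ℕ) (x : RSphere) :
    sphDeriv f^[m + n] x = sphDeriv f^[m] (f^[n] x) * sphDeriv f^[n] x := by
  rw [Function.iterate_add]
  exact ((hf.hasMetricDeriv_iterate m _).comp (hf.hasMetricDeriv_iterate n x)).sphDeriv_eq

lemma lowerSemicontinuous_sphDeriv_iterate (hf : IsMetricallyConformal f) (n : ℕ) :
    LowerSemicontinuous (sphDeriv f^[n]) :=
  lowerSemicontinuous_sphDeriv (hf.hasMetricDeriv_iterate n)

lemma isOpen_compl_critSet (hf : IsMetricallyConformal f) : IsOpen (critSet f)ᶜ := by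
  have : (critSet f)ᶜ = sphDeriv f ⁻¹' Ioi 0 :=
    Set.ext fun x => ⟨hf.sphDeriv_pos, fun h : 0 < sphDeriv f x => h.ne'⟩
  rw [this]
  exact (lowerSemicontinuous_sphDeriv hf.hasMetricDeriv).isOpen_preimage 0

end IsMetricallyConformal

/-! ### Uniform expansion -/

namespace ExpandingOn

variable {f : RSphere → RSphere} {X : Set RSphere} {x : RSphere}

lemma exists_lt_sphDeriv (h : ExpandingOn f X) (a : ℝ) :
    ∃ m, 1 ≤ m ∧ ∀ x ∈ X, a < sphDeriv f^[m] x := by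
  obtain ⟨c, hc, l, hl, h⟩ := h
  have hgrow := (tendsto_pow_atTop_atTop_of_one_lt hl).const_mul_atTop hc
  obtain ⟨m, hm, hm1⟩ := ((hgrow.eventually_gt_atTop a).and (eventually_ge_atTop 1)).exists
  exact ⟨m, hm1, fun x hx => hm.trans_le (h x hx m hm1)⟩

lemma notMem_critSet (h : ExpandingOn f X) (hx : x ∈ X) : x ∉ critSet f := by
  obtain ⟨c, hc, l, hl, h⟩ := h
  have hpos : 0 < c * l ^ 1 := by positivity
  exact (hpos.trans_le (h x hx 1 le_rfl)).ne'

end ExpandingOn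

lemma exists_pos_forall_of_eventually_diagonal {S : Type*} [PseudoMetricSpace S] {K : Set S}
    (hK : IsCompact K) {P : S × S → Prop} (hP : ∀ x ∈ K, ∀ᶠ p in 𝓝 (x, x), P p) :
    ∃ r > 0, ∀ u ∈ thickening r K, ∀ v, dist u v < r → P (u, v) := by
  have hsub : (fun x => (x, x)) '' K ⊆ interior {p | P p} := by
    rintro _ ⟨x, hx, rfl⟩
    exact mem_interior_iff_mem_nhds.mpr (hP x hx)
  obtain ⟨r, hr, hrP⟩ := (hK.image
    (continuous_id.prodMk continuous_id)).exists_thickening_subset_open isOpen_interior hsub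
  refine ⟨r / 2, half_pos hr, fun u hu v huv => interior_subset (hrP ?_)⟩
  obtain ⟨x, hx, hux⟩ := mem_thickening_iff.mp hu
  refine mem_thickening_iff.mpr ⟨(x, x), mem_image_of_mem _ hx, ?_⟩
  rw [Prod.dist_eq]
  exact max_lt (by linarith) (by linarith [dist_triangle_left v x u])

lemma not_eventually_dist_iterate_lt {S : Type*} [MetricSpace S] {g : S → S} {Z : Set S} {z : S}
    [(𝓝[≠] z).NeBot] {r : ℝ} (hZ : MapsTo g Z Z) (hz : z ∈ Z)
    (hexp : ∀ u ∈ Z, ∀ v, dist u v < r → 2 * dist u v ≤ dist (g u) (g v)) :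
    ¬ ∀ᶠ y in 𝓝 z, ∀ n, dist (g^[n] z) (g^[n] y) < r := by
  intro hclose
  obtain ⟨y, hy, hyz⟩ := ((hclose.filter_mono nhdsWithin_le_nhds).and
    (self_mem_nhdsWithin (s := {z}ᶜ))).exists
  have hgrow : ∀ n : ℕ, 2 ^ n * dist z y ≤ dist (g^[n] z) (g^[n] y) := by
    intro n
    induction n with
    | zero => simp
    | succ n ih =>
      have := hexp _ (hZ.iterate n hz) _ (hy n)
      rw [Function.iterate_succ_apply', Function.iterate_succ_apply', pow_succ]
      linarith
  have hpos : 0 < dist z y := dist_pos.mpr (Ne.symm hyz)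
  obtain ⟨n, hn⟩ := (((tendsto_pow_atTop_atTop_of_one_lt (one_lt_two (α := ℝ))).atTop_mul_const
    hpos).eventually_ge_atTop r).exists
  exact (hy n).not_ge (hn.trans (hgrow n))

namespace IsMetricallyConformal

variable {f : RSphere → RSphere} {X Y : Set RSphere} {a l : ℝ} {N : ℕ}

lemma pow_le_sphDeriv_iterate (hf : IsMetricallyConformal f) (ha : 0 ≤ a) (hY : MapsTo f Y Y)
    (hlow : ∀ x ∈ Y, a ≤ sphDeriv f x) (n : ℕ) : ∀ x ∈ Y, a ^ n ≤ sphDeriv f^[n] x := by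
  induction n with
  | zero => exact fun x _ => (hf.sphDeriv_iterate_zero x).ge
  | succ n ih =>
    intro x hx
    rw [hf.sphDeriv_iterate_add n 1 x, pow_succ]
    exact mul_le_mul (ih _ (hY hx)) (hlow x hx) ha (hf.sphDeriv_nonneg n _)

lemma mul_pow_le_sphDeriv_iterate (hf : IsMetricallyConformal f) (ha : 0 < a) (hal : a ≤ l)
    (hY : MapsTo f Y Y) (hlow : ∀ x ∈ Y, a ≤ sphDeriv f x)
    (hexp : ∀ x ∈ Y, ∃ m, 1 ≤ m ∧ m ≤ N ∧ l ^ m ≤ sphDeriv f^[m] x) (n : ℕ) :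
    ∀ x ∈ Y, (a / l) ^ N * l ^ n ≤ sphDeriv f^[n] x := by
  have hl : 0 < l := ha.trans_le hal
  have hal0 : 0 ≤ a / l := (div_pos ha hl).le
  induction n using Nat.strong_induction_on with
  | _ n ih =>
    intro x hx
    obtain ⟨m, hm1, hmN, hm⟩ := hexp x hx
    obtain hnm | hmn := lt_or_ge n m
    · calc (a / l) ^ N * l ^ n ≤ (a / l) ^ n * l ^ n := by
            gcongr ?_ * _
            exact pow_le_pow_of_le_one hal0 ((div_le_one hl).mpr hal) (hnm.le.trans hmN)
        _ = a ^ n := by rw [← mul_pow, div_mul_cancel₀ _ hl.ne']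
        _ ≤ sphDeriv f^[n] x := hf.pow_le_sphDeriv_iterate ha.le hY hlow n x hx
    · obtain ⟨k, rfl⟩ := Nat.exists_eq_add_of_le' hmn
      rw [hf.sphDeriv_iterate_add, pow_add, ← mul_assoc]
      exact mul_le_mul (ih k (by omega) _ (hY.iterate m hx)) hm (pow_nonneg hl.le m)
        (hf.sphDeriv_nonneg k _)

lemma expandingOn_of_bounded_time (hf : IsMetricallyConformal f) (ha : 0 < a) (hal : a ≤ l)
    (hl : 1 < l) (hY : MapsTo f Y Y) (hlow : ∀ x ∈ Y, a ≤ sphDeriv f x)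
    (hexp : ∀ x ∈ Y, ∃ m, 1 ≤ m ∧ m ≤ N ∧ l ^ m ≤ sphDeriv f^[m] x) : ExpandingOn f Y :=
  ⟨(a / l) ^ N, pow_pos (div_pos ha (zero_lt_one.trans hl)) N, l, hl, fun x hx n _ =>
    hf.mul_pow_le_sphDeriv_iterate ha hal hY hlow hexp n x hx⟩

lemma isOpen_setOf_bounded_time (hf : IsMetricallyConformal f) (a l : ℝ) (N : ℕ) :
    IsOpen {x | a < sphDeriv f x ∧ ∃ m, 1 ≤ m ∧ m ≤ N ∧ l ^ m < sphDeriv f^[m] x} := by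
  have hopen : ∀ n b, IsOpen {x | b < sphDeriv f^[n] x} := fun n b =>
    (hf.lowerSemicontinuous_sphDeriv_iterate n).isOpen_preimage b
  rw [isOpen_iff_mem_nhds]
  rintro x ⟨hx, m, hm1, hmN, hm⟩
  filter_upwards [(hopen 1 a).mem_nhds hx, (hopen m (l ^ m)).mem_nhds hm] with y hy hym
  exact ⟨hy, m, hm1, hmN, hym⟩

theorem exists_isOpen_expandingOn (hf : IsMetricallyConformal f) (hX : IsCompact X)
    (hcrit : ∀ x ∈ X, x ∉ critSet f) (hexp : ∀ x ∈ X, ∃ m, 1 ≤ m ∧ 1 < sphDeriv f^[m] x) :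
    ∃ O, IsOpen O ∧ X ⊆ O ∧ ∀ Y ⊆ O, MapsTo f Y Y → ExpandingOn f Y := by
  set a : ℕ → ℝ := fun N => 1 / ((N : ℝ) + 1)
  have ha : ∀ N, 0 < a N := fun N => Nat.one_div_pos_of_nat
  have hanti : Antitone a := fun M N h => Nat.one_div_le_one_div h
  have hlim : Tendsto a atTop (𝓝 0) := tendsto_one_div_add_atTop_nhds_zero_nat
  set A : ℕ → Set RSphere := fun N =>
    {x | a N < sphDeriv f x ∧ ∃ m, 1 ≤ m ∧ m ≤ N ∧ (1 + a N) ^ m < sphDeriv f^[m] x}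
  have hA : Monotone A := by
    rintro M N h x ⟨hx, m, hm1, hmM, hm⟩
    refine ⟨(hanti h).trans_lt hx, m, hm1, hmM.trans h, hm.trans_le' ?_⟩
    exact pow_le_pow_left₀ (by linarith [ha N]) (by linarith [hanti h]) m
  have hcover : X ⊆ ⋃ N, A N := by
    intro x hx
    obtain ⟨m, hm1, hm⟩ := hexp x hx
    have hpow : Tendsto (fun N => (1 + a N) ^ m) atTop (𝓝 1) := by
      simpa using (hlim.const_add 1).pow m
    obtain ⟨N, hN, hNpow, hmN⟩ := ((hlim.eventually_lt_const (hf.sphDeriv_pos (hcrit x hx))).and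
      ((hpow.eventually_lt_const hm).and (eventually_ge_atTop m))).exists
    exact mem_iUnion.mpr ⟨N, hN, m, hm1, hmN, hNpow⟩
  have hAo : ∀ N, IsOpen (A N) := fun N => hf.isOpen_setOf_bounded_time (a N) (1 + a N) N
  obtain ⟨N, hXN⟩ := hX.elim_directed_cover A hAo hcover hA.directed_le
  refine ⟨A N, hAo N, hXN, fun Y hY hmaps => ?_⟩
  refine hf.expandingOn_of_bounded_time (l := 1 + a N) (N := N) (ha N) (by linarith)
    (by linarith [ha N]) hmaps (fun x hx => (hY hx).1.le) fun x hx => ?_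
  obtain ⟨m, hm1, hmN, hm⟩ := (hY hx).2
  exact ⟨m, hm1, hmN, hm.le⟩

lemma exists_two_mul_dist_le (hf : IsMetricallyConformal f) (hX : IsCompact X)
    (hexp : ExpandingOn f X) :
    ∃ m > 0, ∃ r > 0, ∀ u ∈ thickening r X, ∀ v, dist u v < r →
      2 * dist u v ≤ dist (f^[m] u) (f^[m] v) := by
  obtain ⟨m, hm1, hm⟩ := hexp.exists_lt_sphDeriv 2
  exact ⟨m, hm1, exists_pos_forall_of_eventually_diagonal hX fun x hx =>
    (hf.hasMetricDeriv_iterate m x).eventually_mul_dist_le (hm x hx)⟩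

theorem topExpanding (hf : IsMetricallyConformal f) (hX : IsCompact X)
    (hexp : ExpandingOn f X) : TopExpanding f X := by
  obtain ⟨m, hm, r, hr, hdist⟩ := hf.exists_two_mul_dist_le hX hexp
  have hpow : ((2 : ℝ) ^ (m : ℝ)⁻¹) ^ m = 2 := Real.rpow_inv_natCast_pow zero_le_two hm.ne'
  have hκ : (1 : ℝ) < 2 ^ (m : ℝ)⁻¹ :=
    Real.one_lt_rpow one_lt_two (inv_pos.mpr (Nat.cast_pos.mpr hm))
  refine .of_expand_iterate hf.continuous hX hκ hr hm (fun u hu v huv => ?_)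
    fun x hx => hf.nhds_le_map x (hexp.notMem_critSet hx)
  rw [hpow]
  exact hdist u hu v huv

theorem subset_juliaSet (hf : IsMetricallyConformal f) (hX : IsCompact X)
    (hmaps : MapsTo f X X) (hexp : ExpandingOn f X) : X ⊆ juliaSet f := by
  obtain ⟨m, -, r, hr, hdist⟩ := hf.exists_two_mul_dist_le hX hexp
  rintro z hz ⟨U, hU, hzU, hequi⟩
  have hclose : ∀ᶠ y in 𝓝[U] z, ∀ n, dist (f^[n] z) (f^[n] y) < r :=
    hequi z hzU _ (dist_mem_uniformity hr)
  rw [hU.nhdsWithin_eq hzU] at hclose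
  refine not_eventually_dist_iterate_lt (hmaps.iterate m) hz
    (fun u hu => hdist u (self_subset_thickening hr X hu)) (hclose.mono fun y hy n => ?_)
  rw [← Function.iterate_mul]
  exact hy (m * n)

end IsMetricallyConformal

/-! ### Expanding Cantor repellers -/

namespace GDS

variable {f : RSphere → RSphere} {Λ : Set RSphere} {x : RSphere}

lemma iterate_mem_of_mem_gdsCyl (G : GDS f) (m : ℕ) :
    ∀ x ∈ gdsCyl G m, f^[m] x ∈ ⋃ k, G.U k := by
  induction m with
  | zero => exact fun _ hx => hx
  | succ m ih =>
    intro x hx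
    simp only [gdsCyl, mem_iUnion] at hx
    obtain ⟨k, l, hkl, w, ⟨hw, hwl⟩, rfl⟩ := hx
    rw [Function.iterate_succ_apply, G.isBranch k l hkl w (subset_closure hwl)]
    exact ih w hw

lemma gdsLimit_subset_survivorSet (G : GDS f) : gdsLimit G ⊆ survivorSet f (⋃ k, G.U k) :=
  fun x hx m => G.iterate_mem_of_mem_gdsCyl m x (mem_iInter.mp hx m)

lemma subset_gdsLimit (G : GDS f) (hmaps : MapsTo f Λ Λ)
    (hcode : ∀ x ∈ Λ, ∃ k l, G.edge k l ∧ x ∈ G.U k ∧ f x ∈ G.U l ∧ G.br k l (f x) = x) :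
    Λ ⊆ gdsLimit G := by
  refine subset_iInter fun m => ?_
  induction m with
  | zero =>
    intro x hx
    obtain ⟨k, l, -, hk, -⟩ := hcode x hx
    exact mem_iUnion.mpr ⟨k, hk⟩
  | succ m ih =>
    intro x hx
    obtain ⟨k, l, hkl, -, hl, hbr⟩ := hcode x hx
    simp only [gdsCyl, mem_iUnion]
    exact ⟨k, l, hkl, f x, ⟨ih (hmaps hx), hl⟩, hbr⟩

lemma eq_of_mem (G : GDS f) {k l : Fin G.n} (hk : x ∈ G.U k) (hl : x ∈ G.U l) : k = l := by
  by_contra h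
  have hmem : x ∈ closure (G.U k) ∩ closure (G.U l) := ⟨subset_closure hk, subset_closure hl⟩
  rwa [G.disjClosure k l h] at hmem

lemma br_apply_eq (G : GDS f) {k l : Fin G.n} (hx : x ∈ gdsLimit G) (hk : x ∈ G.U k)
    (hl : f x ∈ G.U l) : G.br k l (f x) = x := by
  have hcyl := mem_iInter.mp hx 1
  simp only [gdsCyl, mem_iUnion] at hcyl
  obtain ⟨k', l', hkl, w, ⟨-, hw⟩, rfl⟩ := hcyl
  have hcl := subset_closure hw
  rw [G.isBranch k' l' hkl w hcl] at hl ⊢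
  rw [G.eq_of_mem hk (G.mapsTo k' l' hkl hcl), G.eq_of_mem hl hw]

lemma exists_continuousOn_vertex (G : GDS f) : ∃ c : RSphere → Fin G.n,
    ContinuousOn c (⋃ k, G.U k) ∧ ∀ x ∈ ⋃ k, G.U k, x ∈ G.U (c x) := by
  have hvertex : ∀ x, ∃ k, x ∈ ⋃ k, G.U k → x ∈ G.U k := fun x => by
    by_cases hx : x ∈ ⋃ k, G.U k
    · exact (mem_iUnion.mp hx).imp fun k hk _ => hk
    · exact ⟨⟨0, G.npos⟩, fun h => absurd h hx⟩
  choose c hc using hvertex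
  refine ⟨c, fun x hx => ?_, hc⟩
  refine (continuousAt_const.congr (x := x) (f := fun _ => c x) ?_).continuousWithinAt
  filter_upwards [(G.isOpen (c x)).mem_nhds (hc x hx)] with y hy
  exact G.eq_of_mem hy (hc y (mem_iUnion.mpr ⟨_, hy⟩))

end GDS

lemma MarkovCover.exists_inverse_branch {S : Type*} [TopologicalSpace S] {f : S → S} {Λ : Set S}
    {𝒰 : Set (Set S)} (h : MarkovCover f Λ 𝒰) {U V : Set S} (hU : U ∈ 𝒰) (hV : V ∈ 𝒰) :
    ∃ g : S → S, (∃ x ∈ Λ, x ∈ U ∧ f x ∈ V) → MapsTo g (closure V) U ∧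
      (∀ v ∈ closure V, f (g v) = v) ∧ ∀ x ∈ U, f x ∈ V → g (f x) = x := by
  by_cases hUV : ∃ x ∈ Λ, x ∈ U ∧ f x ∈ V
  · obtain ⟨x, hx, hxU, hxV⟩ := hUV
    obtain ⟨g, hg, hfg⟩ := h.exists_branch x hx U hU V hV hxU hxV
    exact ⟨g, fun _ => ⟨hg, hfg, fun u hu hfu =>
      h.injOn U hU (hg (subset_closure hfu)) hu (hfg _ (subset_closure hfu))⟩⟩
  · exact ⟨id, fun hUV' => absurd hUV' hUV⟩

theorem MarkovCover.exists_gds {f : RSphere → RSphere} {Λ : Set RSphere} {𝒰 : Set (Set RSphere)}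
    (h : MarkovCover f Λ 𝒰) (hne : Λ.Nonempty) (hmaps : MapsTo f Λ Λ) :
    ∃ G : GDS f, Λ ⊆ gdsLimit G ∧ ∀ k, G.U k ∈ 𝒰 := by
  have := h.finite.to_subtype
  obtain ⟨n, ⟨e⟩⟩ := Finite.exists_equiv_fin 𝒰
  set U : Fin n → Set RSphere := fun k => e.symm k
  have hU : ∀ k, U k ∈ 𝒰 := fun k => (e.symm k).2
  have hmem : ∀ x ∈ Λ, ∃ k, x ∈ U k := by
    intro x hx
    obtain ⟨V, hV, hxV⟩ := h.exists_mem x hx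
    exact ⟨e ⟨V, hV⟩, by simpa only [U, e.symm_apply_apply]⟩
  obtain ⟨k₀, -⟩ := hmem _ hne.some_mem
  set edge : Fin n → Fin n → Prop := fun k l => ∃ x ∈ Λ, x ∈ U k ∧ f x ∈ U l
  choose br hbr using fun k l => h.exists_inverse_branch (hU k) (hU l)
  -- `distortionOn` is a real number, so finitely many branches always have a common bound.
  obtain ⟨C, hC⟩ := Finite.exists_le fun kl : Fin n × Fin n =>
    distortionOn (br kl.1 kl.2) (closure (U kl.2))
  have hdisj : ∀ k l, k ≠ l → closure (U k) ∩ closure (U l) = ∅ := fun k l hkl =>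
    (h.disjoint_closure (hU k) (hU l) fun hUV => hkl (e.symm.injective
      (Subtype.ext hUV))).inter_eq
  refine ⟨⟨n, k₀.pos, U, edge, br, fun k => h.isOpen _ (hU k), fun k => h.isConnected _ (hU k),
    hdisj, fun k l hkl => (hbr k l hkl).1, fun k l hkl => (hbr k l hkl).2.1,
    C, fun k l _ => hC (k, l)⟩, GDS.subset_gdsLimit _ hmaps fun x hx => ?_, hU⟩
  obtain ⟨k, hk⟩ := hmem x hx
  obtain ⟨l, hl⟩ := hmem (f x) (hmaps hx)
  have hkl : edge k l := ⟨x, hx, hk, hl⟩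
  exact ⟨k, l, hkl, hk, hl, (hbr k l hkl).2.2 x hk hl⟩

namespace IsMetricallyConformal

variable {f : RSphere → RSphere} {K L W X : Set RSphere} {x : RSphere}

lemma isTotallyDisconnected_of_isECR (hf : IsMetricallyConformal f) (h : IsECR f X) :
    IsTotallyDisconnected X := by
  obtain ⟨hexp, ⟨hX, hfX, -⟩, G, rfl⟩ := h
  obtain ⟨c, hc, hmem⟩ := G.exists_continuousOn_vertex
  have hmaps : MapsTo f (gdsLimit G) (gdsLimit G) := mapsTo_iff_image_subset.mpr hfX.le
  have hsub : gdsLimit G ⊆ ⋃ k, G.U k := iInter_subset _ 0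
  have hpair : ContinuousOn (fun x => (c x, c (f x))) (gdsLimit G) :=
    (hc.mono hsub).prodMk (hc.comp hf.continuous.continuousOn (hmaps.mono_right hsub))
  refine (hf.topExpanding hX hexp).isTotallyDisconnected hf.continuous hX hmaps hpair ?_
  intro u hu v hv huv hfuv
  obtain ⟨hcuv, -⟩ := Prod.mk.inj huv
  rw [← G.br_apply_eq hu (hmem u (hsub hu)) (hmem _ (hsub (hmaps hu))),
    ← G.br_apply_eq hv (hmem v (hsub hv)) (hmem _ (hsub (hmaps hv))),
    hcuv, hfuv]

lemma isECR_survivorSet (hf : IsMetricallyConformal f) (hW : IsOpen W)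
    (hne : (survivorSet f W).Nonempty) (hc : IsCompact (survivorSet f W))
    (himage : f '' survivorSet f W = survivorSet f W)
    (htd : IsTotallyDisconnected (survivorSet f W)) (hexp : ExpandingOn f (survivorSet f W)) :
    IsECR f (survivorSet f W) := by
  obtain ⟨𝒰, h𝒰, hsub⟩ := (hf.topExpanding hc hexp).exists_markovCover hW hc htd
  obtain ⟨G, hG, hGU⟩ := h𝒰.exists_gds hne mapsTo_survivorSet
  refine ⟨hexp, ⟨hc, himage, W, hW, survivorSet_subset, fun x hx => hx⟩, G, hG.antisymm' ?_⟩
  exact G.gdsLimit_subset_survivorSet.trans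
    (survivorSet_mono (iUnion_subset fun k => hsub _ (hGU k)))

theorem exists_isECR (hf : IsMetricallyConformal f) (hX : IsCompact X) (hne : X.Nonempty)
    (hfX : f '' X = X) (htd : IsTotallyDisconnected X) (hcrit : ∀ x ∈ X, x ∉ critSet f)
    (hexp : ∀ x ∈ X, ∃ m, 1 ≤ m ∧ 1 < sphDeriv f^[m] x) :
    ∃ Λ, IsECR f Λ ∧ X ⊆ Λ ∧ (ChainTransitiveOn f X → TopTransOn f Λ) := by
  obtain ⟨O, hO, hXO, hOexp⟩ := hf.exists_isOpen_expandingOn hX hcrit hexp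
  have hXexp := hf.topExpanding hX (hOexp X hXO (mapsTo_iff_image_subset.mpr hfX.le))
  obtain ⟨W, hWO, hW, hXW, hclosed, himage, hWtd, htrans⟩ :=
    hXexp.exists_survivorSet hf.continuous hX hfX htd hO hXO
  exact ⟨survivorSet f W, hf.isECR_survivorSet hW (hne.mono hXW) hclosed.isCompact himage hWtd
    (hOexp _ (survivorSet_subset.trans hWO) mapsTo_survivorSet), hXW, htrans⟩

lemma exists_bridge (hf : IsMetricallyConformal f) (hK : IsCompact K) (hfK : f '' K = K)
    (hexp : ExpandingOn f K) (hne : K.Nonempty) (hx : NonImmPostCrit f x) :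
    ∃ y, y 0 = x ∧ BackwardOrbitTo f K y ∧ ∀ k, y k ∉ critSet f := by
  obtain ⟨b, rfl, hb, hbJ, hbcrit⟩ := hx
  exact (hf.topExpanding hK hexp).exists_bridge hK hne hfK hf.isOpen_compl_critSet
    (fun x hx => hexp.notMem_critSet hx) hb hbcrit
    ((hf.subset_juliaSet hK (mapsTo_iff_image_subset.mpr hfK.le) hexp).trans hbJ)

lemma exists_one_lt_sphDeriv_of_backward_orbit (hf : IsMetricallyConformal f)
    (hexp : ExpandingOn f L) {y : ℕ → RSphere} (hy : ∀ k, f (y (k + 1)) = y k)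
    (hy0 : y 0 ∈ L) (hcrit : ∀ k, y k ∉ critSet f) (k : ℕ) :
    ∃ m, 1 ≤ m ∧ 1 < sphDeriv f^[m] (y k) := by
  have hpos : f^[k] (y k) = y 0 ∧ 0 < sphDeriv f^[k] (y k) := by
    induction k with
    | zero => exact ⟨rfl, by rw [hf.sphDeriv_iterate_zero]; exact one_pos⟩
    | succ k ih =>
      rw [hf.sphDeriv_iterate_add, Function.iterate_succ_apply, Function.iterate_one, hy]
      exact ⟨ih.1, mul_pos ih.2 (hf.sphDeriv_pos (hcrit (k + 1)))⟩
  obtain ⟨m, hm1, hm⟩ := hexp.exists_lt_sphDeriv (sphDeriv f^[k] (y k))⁻¹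
  refine ⟨m + k, by omega, ?_⟩
  rw [hf.sphDeriv_iterate_add, hpos.1]
  exact (inv_lt_iff_one_lt_mul₀ hpos.2).mp (hm _ hy0)

lemma forall_union_range_of_bridge (hf : IsMetricallyConformal f) (hK : ExpandingOn f K)
    (hL : ExpandingOn f L) {y : ℕ → RSphere} (hy : BackwardOrbitTo f K y) (hy0 : y 0 ∈ L)
    (hcrit : ∀ k, y k ∉ critSet f) :
    ∀ x ∈ K ∪ range y, x ∉ critSet f ∧ ∃ m, 1 ≤ m ∧ 1 < sphDeriv f^[m] x := by
  rintro x (hx | ⟨k, rfl⟩)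
  · exact ⟨hK.notMem_critSet hx, (hK.exists_lt_sphDeriv 1).imp fun m hm => ⟨hm.1, hm.2 x hx⟩⟩
  · exact ⟨hcrit k, hf.exists_one_lt_sphDeriv_of_backward_orbit hL hy.apply_succ hy0 hcrit k⟩

end IsMetricallyConformal

theorem bridge_between_ECRs_general {f : RSphere → RSphere} (hf : IsMetricallyConformal f)
    {Λ₁ Λ₂ : Set RSphere} (hc₁ : IsCompact Λ₁) (hc₂ : IsCompact Λ₂) (hinv₁ : f '' Λ₁ = Λ₁)
    (hinv₂ : f '' Λ₂ = Λ₂) (hexp₁ : ExpandingOn f Λ₁) (hexp₂ : ExpandingOn f Λ₂)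
    (htd₁ : IsTotallyDisconnected Λ₁) (htd₂ : IsTotallyDisconnected Λ₂)
    (hp₁ : ∃ x ∈ Λ₁, NonImmPostCrit f x) (hp₂ : ∃ x ∈ Λ₂, NonImmPostCrit f x) :
    ∃ Λ : Set RSphere, Λ ⊆ juliaSet f ∧ IsECR f Λ ∧ Λ₁ ∪ Λ₂ ⊆ Λ ∧
      (TopTransOn f Λ₁ → TopTransOn f Λ₂ → TopTransOn f Λ) := by
  obtain ⟨x₁, hx₁, hx₁c⟩ := hp₁
  obtain ⟨x₂, hx₂, hx₂c⟩ := hp₂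
  obtain ⟨y, rfl, hy, hyc⟩ := hf.exists_bridge hc₁ hinv₁ hexp₁ ⟨x₁, hx₁⟩ hx₂c
  obtain ⟨w, rfl, hw, hwc⟩ := hf.exists_bridge hc₂ hinv₂ hexp₂ ⟨_, hx₂⟩ hx₁c
  have hyX := hy.isCompact_union_range hc₁
  have hwX := hw.isCompact_union_range hc₂
  have htd := isTotallyDisconnected_union (hy.isTotallyDisconnected_union_range hc₁ htd₁)
    (hw.isTotallyDisconnected_union_range hc₂ htd₂) hyX.isClosed hwX
  have hpt : ∀ x ∈ (Λ₁ ∪ range y) ∪ (Λ₂ ∪ range w),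
      x ∉ critSet f ∧ ∃ m, 1 ≤ m ∧ 1 < sphDeriv f^[m] x := union_subset
    (hf.forall_union_range_of_bridge hexp₁ hexp₂ hy hx₂ hyc)
    (hf.forall_union_range_of_bridge hexp₂ hexp₁ hw hx₁ hwc)
  obtain ⟨Λ, hΛ, hsub, htrans⟩ := hf.exists_isECR (hyX.union hwX) ⟨_, .inl (.inl hx₁)⟩
    (hy.image_union_bridges hw hinv₁ hinv₂ hx₂ hx₁) htd (fun x hx => (hpt x hx).1)
    fun x hx => (hpt x hx).2
  refine ⟨Λ, hf.subset_juliaSet hΛ.2.1.1 (mapsTo_iff_image_subset.mpr hΛ.2.1.2.1.le) hΛ.1, hΛ,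
    (union_subset_union subset_union_left subset_union_left).trans hsub, fun ht₁ ht₂ => htrans ?_⟩
  have hct₁ := TransitiveOn.chainTransitiveOn ht₁ hf.continuous
    (mapsTo_iff_image_subset.mpr hinv₁.le)
  have hct₂ := TransitiveOn.chainTransitiveOn ht₂ hf.continuous
    (mapsTo_iff_image_subset.mpr hinv₂.le)
  exact hy.chainTransitiveOn_union_bridges hw hinv₁ hinv₂ hct₁ hct₂ hx₂ hx₁

/-- **Lemma (building bridges).**
For any two disjoint `f`-expanding Cantor repellers `Λ₁, Λ₂ ⊆ J` that both contain
non-immediately postcritical points there is an `f`-expanding Cantor repeller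
`Λ ⊆ J` containing `Λ₁ ∪ Λ₂`; if `f` is topologically transitive on each `Λᵢ` then it
is topologically transitive on `Λ`. -/
theorem bridge_between_ECRs (f : RSphere → RSphere) (p q : Polynomial ℂ)
    (hf : IsRationalMap f p q) (hdeg : 2 ≤ ratDeg p q)
    (Λ₁ Λ₂ : Set RSphere) (h1J : Λ₁ ⊆ juliaSet f) (h2J : Λ₂ ⊆ juliaSet f)
    (h1 : IsECR f Λ₁) (h2 : IsECR f Λ₂) (hdisj : Disjoint Λ₁ Λ₂)
    (hp1 : ∃ x ∈ Λ₁, NonImmPostCrit f x) (hp2 : ∃ x ∈ Λ₂, NonImmPostCrit f x) :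
    ∃ Λ : Set RSphere, Λ ⊆ juliaSet f ∧ IsECR f Λ ∧ Λ₁ ∪ Λ₂ ⊆ Λ ∧
      (TopTransOn f Λ₁ → TopTransOn f Λ₂ → TopTransOn f Λ) := by
  have hfc := hf.isMetricallyConformal (by omega)
  exact bridge_between_ECRs_general hfc h1.2.1.1 h2.2.1.1 h1.2.1.2.1 h2.2.1.2.1 h1.1 h2.1
    (hfc.isTotallyDisconnected_of_isECR h1) (hfc.isTotallyDisconnected_of_isECR h2) hp1 hp2
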